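/- arXiv:1002.1998 — 2 statements merged into one kernel-verified Lean document; each statement's English description precedes it below -/
import Mathlib

section
/- If the Riemann Hypothesis holds, then there exists x_0 such that for all real x ≥ x_0, |ϑ(x) − x| < (1/(8π)) · √x · (log x)^2, where ϑ(x) = ∑_{p ≤ x, p prime} log p. -/
/-!
Under the Riemann Hypothesis, an explicit formula expresses the error `ψ(x) - x` as a sum over the
zeros of the zeta function, of size `√x * ∑ 1 / |ρ|` over the zeros up to height about `√x`. That sum
is `(log T)² / (2π) + O(log T)` at height `T`, and `T` slightly below `√x` gives `(log x)² / (8π)`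
minus a large multiple of `log x`, which absorbs every other error, including `ψ - ϑ`.

The zeros are those of the entire function `f(s) = (s - 1) ζ(s)` (`riemannZeta₁`), counted with
multiplicity; they include the trivial ones.

* Counting. The functional equation and `|Γ(w)| ≤ Γ(Re w)` give
  `log |f(s)| ≤ max (-Re s) 0 * log |s| + O(|s|)` (`exists_growth`). Its mean over a circle of radius `R`
  is `(R / π) log R + O(R)`, so Jensen's formula bounds `∑ log⁺ (R / |ρ|)` by this quantity
  (`exists_jensen_zeta`). Integrating against `R⁻² dR` and `R⁻³ dR` gives
  `∑_{|ρ| ≤ T} 1 / |ρ| ≤ (log T)² / (2π) + O(1 + log T)` (`exists_sum_inv_le`) and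
  `∑_{|ρ| > T} 1 / |ρ|² = O((1 + log T) / T)` (`exists_sum_inv_sq_le`). Only upper bounds are needed, so
  neither the argument principle nor Stirling's formula for complex arguments is used.

* Explicit formula. By Hadamard's theorem `f'/f (s) - f'/f (0) = ∑ s / (ρ (s - ρ))` (`hadamard`).
  Let `ψ₁(x) = ∑ Λ(n) (x - n)⁺` be the primitive of `ψ`. On the line `Re s = 2`, the moments
  `∫₁^∞ x^(-s-2) (·) dx` of both sides of
  `ψ₁(x) = (x - 1)² / 2 - f'/f (0) (x - 1) - ∑ (x^(ρ+1) - 1) / (ρ (ρ + 1))` agree, by the Dirichlet series of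
  `-ζ'/ζ` and the Hadamard expansion. Both sides are continuous, so Mellin inversion gives equality
  (`explicit_formula`). No contour is shifted.

* Conclusion. As `ψ` is monotone, `h ψ(x)` lies between `ψ₁(x) - ψ₁(x - h)` and `ψ₁(x + h) - ψ₁(x)`. In these
  increments a zero contributes at most `h √(x + h) / |ρ|` and at most `4 (x + h)^(3/2) / |ρ|²`; the
  first bound is used for `|ρ| ≤ T`, the second for `|ρ| > T` (`abs_psi_sub_le`). The choice
  `h = √x log x`, `T = √x exp (-K)` with `K` a large constant finishes the proof (`eventually_theta_lt`).
-/

/-- The first Chebyshev function `ϑ(x) = ∑_{p ≤ x} log p`, summing over primes `p ≤ x`. -/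
noncomputable def chebyshevTheta (x : ℝ) : ℝ :=
  ∑ p ∈ (Finset.range (⌊x⌋₊ + 1)).filter Nat.Prime, Real.log p

/-! ### Growth of `(s - 1) ζ(s)` -/

namespace RHTheta
open Complex Set MeasureTheory Filter Topology

lemma fract_bigO_top :
    (fun t : ℝ => (Ioi (1:ℝ)).indicator (fun t => ((Int.fract t : ℝ) : ℂ)) t)
      =O[atTop] (fun t : ℝ => t ^ (-(0:ℝ))) := by
  refine Asymptotics.IsBigO.of_bound 1 (Eventually.of_forall fun t => ?_)
  simp only [neg_zero, Real.rpow_zero, norm_one, mul_one]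
  by_cases h : t ∈ Ioi (1:ℝ)
  · rw [indicator_of_mem h, Complex.norm_real, Real.norm_eq_abs, abs_of_nonneg (Int.fract_nonneg t)]
    exact (Int.fract_lt_one t).le
  · rw [indicator_of_notMem h]; simp

lemma fract_locInt :
    LocallyIntegrableOn
      (fun t : ℝ => (Ioi (1:ℝ)).indicator (fun t => ((Int.fract t : ℝ) : ℂ)) t) (Ioi 0) := by
  have hm : Measurable (fun t : ℝ => (Ioi (1:ℝ)).indicator (fun t => ((Int.fract t : ℝ) : ℂ)) t) :=
    (Complex.measurable_ofReal.comp measurable_fract).indicator measurableSet_Ioi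
  have : LocallyIntegrable
      (fun t : ℝ => (Ioi (1:ℝ)).indicator (fun t => ((Int.fract t : ℝ) : ℂ)) t) := by
    refine (locallyIntegrable_const (1:ℝ)).mono hm.aestronglyMeasurable
      (Eventually.of_forall fun t => ?_)
    by_cases h : t ∈ Ioi (1:ℝ)
    · rw [indicator_of_mem h, Complex.norm_real, Real.norm_eq_abs,
        abs_of_nonneg (Int.fract_nonneg t)]
      simpa using (Int.fract_lt_one t).le
    · rw [indicator_of_notMem h]; simp
  exact this.locallyIntegrableOn _

/-- The integral `∫₁^∞ {t} t^(-s-1) dt` is a Mellin transform, hence holomorphic for `Re s > 0`. -/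
lemma mellin_fract (s : ℂ) :
    mellin (fun t : ℝ => (Ioi (1:ℝ)).indicator (fun t => ((Int.fract t : ℝ) : ℂ)) t) (-s)
      = ∫ t in Ioi (1:ℝ), ((Int.fract t : ℝ) : ℂ) * (t:ℂ) ^ (-(s+1)) := by
  have h2 : Ioi (1:ℝ) ∩ Ioi 0 = Ioi 1 := by
    ext t; simp only [mem_inter_iff, mem_Ioi]; exact ⟨fun h => h.1, fun h => ⟨h, by linarith⟩⟩
  rw [inter_comm] at h2
  conv_rhs => rw [← h2, ← setIntegral_indicator measurableSet_Ioi]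
  refine setIntegral_congr_fun measurableSet_Ioi fun t ht => ?_
  simp only [smul_eq_mul]
  by_cases h : t ∈ Ioi (1:ℝ)
  · rw [indicator_of_mem h, indicator_of_mem h, mul_comm]; congr 2; ring
  · rw [indicator_of_notMem h, indicator_of_notMem h, mul_zero]

lemma norm_fract_integral_le {s : ℂ} (hs : 0 < s.re) :
    ‖∫ t in Ioi (1:ℝ), ((Int.fract t : ℝ) : ℂ) * (t:ℂ) ^ (-(s+1))‖ ≤ 1 / s.re := by
  have h1 : ∫ t in Ioi (1:ℝ), t ^ (-(s.re+1)) = 1 / s.re := by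
    rw [integral_Ioi_rpow_of_lt (by linarith) one_pos]
    simp
  rw [← h1]
  refine MeasureTheory.norm_integral_le_of_norm_le
    (integrableOn_Ioi_rpow_of_lt (by linarith) one_pos) ?_
  refine (ae_restrict_iff' measurableSet_Ioi).2 (Eventually.of_forall fun t ht => ?_)
  have ht0 : (0:ℝ) < t := lt_trans one_pos ht
  rw [norm_mul, Complex.norm_cpow_eq_rpow_re_of_pos ht0, Complex.norm_real, Real.norm_eq_abs,
    abs_of_nonneg (Int.fract_nonneg t)]
  simp only [neg_re, add_re, one_re]
  exact mul_le_of_le_one_left (Real.rpow_nonneg ht0.le _) (Int.fract_lt_one t).le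

/-- Partial summation for `(s - 1) ζ(s)` in the half-plane of absolute convergence. -/
lemma zeta₁_eq_of_one_lt {s : ℂ} (hs : 1 < s.re) :
    riemannZeta₁ s = s - s * (s-1) *
      ∫ t in Ioi (1:ℝ), ((Int.fract t : ℝ) : ℂ) * (t:ℂ) ^ (-(s+1)) := by
  have hs1 : s ≠ 1 := by rintro rfl; simp at hs
  have hs1' : s - 1 ≠ 0 := sub_ne_zero.2 hs1
  have h0 := LSeries_eq_mul_integral (1 : ℕ → ℂ) (r := 1) (by norm_num) hs
    (LSeriesSummable_one_iff.2 hs) (by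
      refine Asymptotics.IsBigO.of_bound 1 (Eventually.of_forall fun n => ?_)
      simp)
  rw [LSeries_one_eq_riemannZeta hs, riemannZeta_eq_inv_sub_mul hs1] at h0
  have hi : IntegrableOn (fun t : ℝ => (t:ℂ) ^ (-s)) (Ioi 1) :=
    integrableOn_Ioi_cpow_of_lt (by simpa using hs) one_pos
  have hi2 : IntegrableOn (fun t : ℝ => ((Int.fract t : ℝ) : ℂ) * (t:ℂ) ^ (-(s+1))) (Ioi 1) := by
    have : IntegrableOn (fun t : ℝ => (t:ℂ) ^ (-(s+1))) (Ioi 1) :=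
      integrableOn_Ioi_cpow_of_lt (by simp; linarith) one_pos
    refine this.bdd_mul (c := 1)
      (Complex.measurable_ofReal.comp measurable_fract).aestronglyMeasurable
      (Eventually.of_forall fun t => ?_)
    rw [Complex.norm_real, Real.norm_eq_abs, abs_of_nonneg (Int.fract_nonneg t)]
    exact (Int.fract_lt_one t).le
  have h3 : ∫ (t : ℝ) in Ioi 1, (∑ k ∈ Finset.Icc 1 ⌊t⌋₊, (1 : ℕ → ℂ) k) * (t:ℂ) ^ (-(s + 1))
      = (∫ t in Ioi (1:ℝ), (t:ℂ) ^ (-s)) -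
        ∫ t in Ioi (1:ℝ), ((Int.fract t : ℝ) : ℂ) * (t:ℂ) ^ (-(s+1)) := by
    rw [← integral_sub hi hi2]
    refine setIntegral_congr_fun measurableSet_Ioi fun t ht => ?_
    have ht0 : (0:ℝ) < t := lt_trans one_pos ht
    have htc : (t:ℂ) ≠ 0 := by exact_mod_cast ht0.ne'
    have e1 : (t:ℂ) ^ (-s) = t * (t:ℂ) ^ (-(s+1)) := by
      rw [show -s = 1 + -(s+1) by ring, cpow_add _ _ htc, cpow_one]
    have e2 : ((⌊t⌋₊ : ℕ) : ℂ) = t - ((Int.fract t : ℝ) : ℂ) := by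
      have : ((⌊t⌋₊ : ℕ) : ℝ) = t - Int.fract t := by
        rw [natCast_floor_eq_intCast_floor ht0.le]; exact (Int.self_sub_fract t).symm
      rw [← Complex.ofReal_sub, ← this]; simp
    simp only [Pi.one_apply, Finset.sum_const, Nat.card_Icc, add_tsub_cancel_right, nsmul_eq_mul,
      mul_one]
    rw [e1, e2]; ring
  rw [h3, integral_Ioi_cpow_of_lt (by simpa using hs) one_pos] at h0
  have h4 : -s + 1 ≠ 0 := by intro h; apply hs1'; linear_combination -h
  have : riemannZeta₁ s = (s-1) * ((s-1)⁻¹ * riemannZeta₁ s) := by field_simp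
  rw [this, h0]
  simp only [ofReal_one, one_cpow]
  have h5 : (-1 : ℂ) / (-s+1) = 1/(s-1) := by
    rw [div_eq_div_iff h4 hs1']; ring
  rw [h5]
  field_simp

/-- Analytic continuation of the partial summation formula to `Re s > 0`. -/
lemma zeta₁_eq {s : ℂ} (hs : 0 < s.re) :
    riemannZeta₁ s = s - s * (s-1) *
      ∫ t in Ioi (1:ℝ), ((Int.fract t : ℝ) : ℂ) * (t:ℂ) ^ (-(s+1)) := by
  set U : Set ℂ := {s | 0 < s.re}
  have hU : IsOpen U := isOpen_lt continuous_const Complex.continuous_re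
  have hd : DifferentiableOn ℂ (fun s => s - s * (s-1) *
      ∫ t in Ioi (1:ℝ), ((Int.fract t : ℝ) : ℂ) * (t:ℂ) ^ (-(s+1))) U := by
    intro z hz
    have : DifferentiableAt ℂ (fun s : ℂ => mellin (fun t : ℝ =>
        (Ioi (1:ℝ)).indicator (fun t => ((Int.fract t : ℝ) : ℂ)) t) (-s)) z := by
      have := mellin_differentiableAt_of_isBigO_rpow (s := -z) (a := 0) (b := -z.re - 1)
        fract_locInt fract_bigO_top (by simpa [U] using hz) (by
          refine Asymptotics.IsBigO.of_bound 1 ?_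
          filter_upwards [mem_nhdsWithin_of_mem_nhds (Iio_mem_nhds (zero_lt_one (α := ℝ)))] with t ht
          rw [indicator_of_notMem (by simpa using (le_of_lt ht))]; simp) (by simp)
      exact this.comp z differentiable_neg.differentiableAt
    simp only [mellin_fract] at this
    exact ((differentiableAt_id.sub ((differentiableAt_id.mul
      (differentiableAt_id.sub_const 1)).mul this))).differentiableWithinAt
  have := AnalyticOnNhd.eqOn_of_preconnected_of_eventuallyEq (𝕜 := ℂ) (U := U) (z₀ := 2)
    (f := riemannZeta₁)
    (fun z _ => differentiable_riemannZeta₁.analyticAt z) (hd.analyticOnNhd hU)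
    ((convex_halfSpace_re_gt 0).isPreconnected) (by simp [U]) (by
      filter_upwards [(isOpen_lt continuous_const Complex.continuous_re).mem_nhds
        (show (2:ℂ) ∈ {s : ℂ | 1 < s.re} by simp)] with z hz
      exact zeta₁_eq_of_one_lt hz)
  exact this hs

lemma norm_zeta₁_le {s : ℂ} (hs : 1/2 ≤ s.re) : ‖riemannZeta₁ s‖ ≤ 3 * (1 + ‖s‖)^2 := by
  rw [zeta₁_eq (by linarith)]
  have h1 := norm_fract_integral_le (s := s) (by linarith)
  have h2 : 1 / s.re ≤ 2 := by rw [div_le_iff₀ (by linarith)]; linarith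
  have h3 : ‖s - 1‖ ≤ ‖s‖ + 1 := by simpa using norm_sub_le s 1
  refine (norm_sub_le _ _).trans ?_
  rw [norm_mul, norm_mul]
  have h4 : ‖s‖ * ‖s-1‖ * ‖∫ t in Ioi (1:ℝ), ((Int.fract t : ℝ) : ℂ) * (t:ℂ) ^ (-(s+1))‖
      ≤ ‖s‖ * (‖s‖+1) * 2 := by gcongr; linarith
  nlinarith [norm_nonneg s]

lemma norm_Gamma_le {w : ℂ} (hw : 0 < w.re) : ‖Complex.Gamma w‖ ≤ Real.Gamma w.re := by
  rw [Complex.Gamma_eq_integral hw, Real.Gamma_eq_integral hw, Complex.GammaIntegral]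
  refine MeasureTheory.norm_integral_le_of_norm_le (Real.GammaIntegral_convergent hw) ?_
  refine (ae_restrict_iff' measurableSet_Ioi).2 (Eventually.of_forall fun t ht => ?_)
  rw [norm_mul, Complex.norm_cpow_eq_rpow_re_of_pos ht, Complex.norm_real, Real.norm_eq_abs,
    abs_of_pos (Real.exp_pos _)]
  simp

/-- A crude Stirling bound: in the integral for `Γ`, `(t / 2R)^v ≤ exp (t / 2)` since `v ≤ R`. -/
lemma Gamma_one_add_le {v R : ℝ} (hv : 0 ≤ v) (hvR : v ≤ R) (hR : 0 < R) :
    Real.Gamma (1 + v) ≤ 2 * (2 * R) ^ v := by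
  have hi : IntegrableOn (fun t : ℝ => (2*R)^v * Real.exp (-(1/2) * t)) (Ioi 0) :=
    (integrableOn_exp_mul_Ioi (by norm_num) 0).const_mul _
  have h1 : ∫ t in Ioi (0:ℝ), (2*R)^v * Real.exp (-(1/2) * t) = 2 * (2*R)^v := by
    rw [integral_const_mul, integral_exp_mul_Ioi (by norm_num)]; simp; ring
  rw [Real.Gamma_eq_integral (by linarith), ← h1]
  refine setIntegral_mono_on (Real.GammaIntegral_convergent (by linarith)) hi measurableSet_Ioi
    fun t ht => ?_
  have ht : 0 < t := ht
  have e : t ^ (1 + v - 1) = (2*R)^v * (t/(2*R))^v := by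
    rw [← Real.mul_rpow (by positivity) (by positivity)]
    congr 1; field_simp; ring
  have h2 : (t/(2*R))^v ≤ Real.exp (t/2) := by
    rw [Real.rpow_def_of_pos (by positivity)]
    apply Real.exp_le_exp.2
    have : Real.log (t/(2*R)) ≤ t/(2*R) := Real.log_le_self (by positivity)
    calc Real.log (t/(2*R)) * v ≤ t/(2*R) * v := by gcongr
      _ ≤ t/(2*R) * R := by gcongr
      _ = t/2 := by field_simp
  rw [e]
  calc Real.exp (-t) * ((2*R)^v * (t/(2*R))^v) ≤ Real.exp (-t) * ((2*R)^v * Real.exp (t/2)) := by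
        gcongr
    _ = (2*R)^v * (Real.exp (-t) * Real.exp (t/2)) := by ring
    _ = _ := by rw [← Real.exp_add]; congr 2; ring

lemma Gamma_one_add_le' {v R : ℝ} (hv : -(1/2) ≤ v) (hvR : v ≤ R) (hR : 1 ≤ R) :
    Real.Gamma (1 + v) ≤ 8 * R * (2 * R) ^ (max v 0) := by
  rcases le_total 0 v with h | h
  · rw [max_eq_left h]
    refine (Gamma_one_add_le h hvR (by linarith)).trans ?_
    gcongr; linarith
  · rw [max_eq_right h, Real.rpow_zero, mul_one]
    have h1 := Gamma_one_add_le (v := 1+v) (R := R) (by linarith) (by linarith) (by linarith)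
    rw [add_comm 1 (1+v), Real.Gamma_add_one (by linarith)] at h1
    have h2 : (2*R)^(1+v) ≤ 2*R := by
      calc (2*R)^(1+v) ≤ (2*R)^(1:ℝ) := by
            apply Real.rpow_le_rpow_of_exponent_le <;> linarith
        _ = 2*R := Real.rpow_one _
    have h3 : 0 < Real.Gamma (1+v) := Real.Gamma_pos_of_pos (by linarith)
    nlinarith

lemma norm_cos_le (s : ℂ) : ‖Complex.cos s‖ ≤ Real.exp ‖s‖ := by
  rw [Complex.cos, norm_div]
  have h1 : ‖cexp (s * I)‖ ≤ Real.exp ‖s‖ := by simpa using norm_exp_le_exp_norm (s * I)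
  have h2 : ‖cexp (-s * I)‖ ≤ Real.exp ‖s‖ := by simpa using norm_exp_le_exp_norm (-s * I)
  have := norm_add_le (cexp (s * I)) (cexp (-s * I))
  simp only [Complex.norm_ofNat]
  linarith

/-- Growth of `(s - 1) ζ(s)`: the functional equation and the crude bound `|Γ(w)| ≤ Γ(Re w)`
already give the sharp leading term `max (-Re s) 0 * log |s|`. -/
lemma exists_growth : ∃ C : ℝ, 0 < C ∧ ∀ s : ℂ, 1 ≤ ‖s‖ →
    ‖riemannZeta₁ s‖ ≤ Real.exp (max (-s.re) 0 * Real.log ‖s‖ + C * ‖s‖) := by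
  -- All polynomial factors are absorbed into `exp (C * R)`, generously.
  have hpoly : ∀ R : ℝ, 1 ≤ R → R ≤ Real.exp R := fun R _ => by
    linarith [Real.add_one_le_exp R]
  refine ⟨100, by norm_num, fun s hs => ?_⟩
  set R := ‖s‖ with hR
  have hlog : 0 ≤ Real.log R := Real.log_nonneg hs
  have h12 : (12:ℝ) ≤ Real.exp (12 * R) := by linarith [Real.add_one_le_exp (12*R)]
  rcases le_total (1/2) s.re with h | h
  · refine (norm_zeta₁_le h).trans ?_
    have : Real.exp (12 * R) * Real.exp R * Real.exp R ≤
        Real.exp (max (-s.re) 0 * Real.log R + 100 * R) := by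
      rw [← Real.exp_add, ← Real.exp_add]
      apply Real.exp_le_exp.2
      have := mul_nonneg (le_max_right (-s.re) 0) hlog
      linarith
    refine le_trans ?_ this
    calc 3 * (1+R)^2 ≤ 12 * R * R := by nlinarith
      _ ≤ _ := by have := hpoly R hs; gcongr
  · set w := 1 - s with hw
    have hwre : w.re = 1 + -s.re := by simp [hw]; ring
    have hwre2 : 1/2 ≤ w.re := by rw [hwre]; linarith
    have hw0 : 0 < w.re := by linarith
    have hs1 : s ≠ 1 := by rintro rfl; norm_num at h
    have hw1 : w ≠ 1 := by
      intro h1; have : s = 0 := by linear_combination -h1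
      rw [this] at hR; simp at hR; linarith
    have hfe := riemannZeta_one_sub (s := w) (fun n h1 => by
      rw [h1] at hw0; simp at hw0; exact absurd hw0 (by simp)) hw1
    have hsw : 1 - w = s := by simp [hw]
    rw [hsw, riemannZeta_eq_inv_sub_mul hs1, riemannZeta_eq_inv_sub_mul hw1] at hfe
    have hs1' : s - 1 ≠ 0 := sub_ne_zero.2 hs1
    have e : riemannZeta₁ s = (s-1) * ((s-1)⁻¹ * riemannZeta₁ s) := by field_simp
    rw [e, hfe]
    have hws : w - 1 = -s := by simp [hw]
    have hwn : ‖w‖ ≤ 1 + R := by simpa [hw] using norm_sub_le 1 s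
    have hsn : ‖s - 1‖ ≤ R + 1 := by simpa using norm_sub_le s 1
    rw [hws]
    simp only [norm_mul, norm_inv, norm_neg, Complex.norm_ofNat]
    have b1 : ‖(2 * (Real.pi:ℂ)) ^ (-w)‖ ≤ 1 := by
      have : (2 * (Real.pi:ℂ)) = ((2 * Real.pi : ℝ) : ℂ) := by push_cast; ring
      rw [this, Complex.norm_cpow_eq_rpow_re_of_pos (by positivity)]
      apply Real.rpow_le_one_of_one_le_of_nonpos
      · nlinarith [Real.pi_gt_three]
      · simp; linarith
    have b2 : ‖Complex.Gamma w‖ ≤ 8 * R * (2 * R) ^ (max (-s.re) 0) := by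
      refine (norm_Gamma_le hw0).trans ?_
      rw [hwre]
      exact Gamma_one_add_le' (by linarith) ((neg_le_abs _).trans (Complex.abs_re_le_norm s)) hs
    have b3 : ‖Complex.cos (Real.pi * w / 2)‖ ≤ Real.exp (4 * R) := by
      refine (norm_cos_le _).trans (Real.exp_le_exp.2 ?_)
      rw [norm_div, norm_mul, Complex.norm_real, Real.norm_eq_abs, abs_of_pos Real.pi_pos]
      simp only [Complex.norm_ofNat]
      have := Real.pi_lt_four
      nlinarith [norm_nonneg w]
    have b4 : ‖riemannZeta₁ w‖ ≤ 3 * (1 + (1+R))^2 := by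
      refine (norm_zeta₁_le hwre2).trans (by gcongr)
    have b5 : R⁻¹ ≤ 1 := inv_le_one_of_one_le₀ hs
    have b6 : (2*R) ^ (max (-s.re) 0) ≤ Real.exp R * Real.exp (max (-s.re) 0 * Real.log R) := by
      rw [Real.rpow_def_of_pos (by positivity), ← Real.exp_add,
        Real.log_mul (by norm_num) (by positivity)]
      apply Real.exp_le_exp.2
      have h2 : max (-s.re) 0 ≤ R :=
        max_le ((neg_le_abs _).trans (Complex.abs_re_le_norm s)) (by positivity)
      have h3 : Real.log 2 ≤ 1 := by linarith [Real.log_two_lt_d9]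
      have h4 : 0 ≤ Real.log 2 := Real.log_nonneg (by norm_num)
      have h5 := le_max_right (-s.re) 0
      nlinarith
    calc ‖s - 1‖ * (2 * ‖(2 * (Real.pi:ℂ)) ^ (-w)‖ * ‖Complex.Gamma w‖ *
          ‖Complex.cos (Real.pi * w / 2)‖ * (‖s‖⁻¹ * ‖riemannZeta₁ w‖))
        ≤ (R+1) * (2 * 1 * (8 * R * (Real.exp R * Real.exp (max (-s.re) 0 * Real.log R))) *
          Real.exp (4 * R) * (1 * (3 * (1 + (1+R))^2))) := by
          have b2' := b2.trans (mul_le_mul_of_nonneg_left b6 (by positivity))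
          gcongr
      _ = (48 * (R+1) * R * (1+(1+R))^2) * (Real.exp R * Real.exp (4*R)) *
            Real.exp (max (-s.re) 0 * Real.log R) := by ring
      _ ≤ (12 * 12 * 12 * R * R * R * R) * (Real.exp R * Real.exp (4*R)) *
            Real.exp (max (-s.re) 0 * Real.log R) := by
          have q1 : R + 1 ≤ 2 * R := by linarith
          have q2 : (1+(1+R))^2 ≤ (3*R)^2 := by gcongr; linarith
          refine mul_le_mul_of_nonneg_right (mul_le_mul_of_nonneg_right ?_
            (by positivity)) (by positivity)
          calc 48 * (R+1) * R * (1+(1+R))^2 ≤ 48 * (2*R) * R * (3*R)^2 := by gcongr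
            _ = 864 * R^4 := by ring
            _ ≤ 1728 * R^4 := by gcongr; norm_num
            _ = _ := by ring
      _ ≤ (Real.exp (12*R) * Real.exp (12*R) * Real.exp (12*R) *
            Real.exp R * Real.exp R * Real.exp R * Real.exp R) * (Real.exp R * Real.exp (4*R)) *
            Real.exp (max (-s.re) 0 * Real.log R) := by
          have := hpoly R hs; gcongr
      _ ≤ _ := by
          simp only [← Real.exp_add]
          apply Real.exp_le_exp.2
          linarith

end RHTheta

/-! ### Zeros of entire functions and Jensen's inequality -/

namespace RHTheta
open Complex Set MeasureTheory Filter Topology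

/-- The zeros of `f`, as a subtype of `ℂ`. -/
abbrev Zeros (f : ℂ → ℂ) : Type := {ρ : ℂ // f ρ = 0}

/-- The multiplicity of `ρ` as a zero of `f`. -/
noncomputable abbrev mult (f : ℂ → ℂ) (ρ : ℂ) : ℕ := analyticOrderNatAt f ρ

theorem order_ne_top {f : ℂ → ℂ} (hf : Differentiable ℂ f) (h0 : f 0 ≠ 0) (a : ℂ) :
    analyticOrderAt f a ≠ ⊤ := by
  have hA : AnalyticOnNhd ℂ f univ := fun z _ => hf.analyticAt z
  refine hA.analyticOrderAt_ne_top_of_isPreconnected (x := 0) isPreconnected_univ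
    (mem_univ _) (mem_univ _) ?_
  rw [(hf.analyticAt 0).analyticOrderAt_eq_zero.2 h0]
  simp

theorem zeros_ne_zero {f : ℂ → ℂ} (h0 : f 0 ≠ 0) (ρ : Zeros f) : (ρ : ℂ) ≠ 0 := by
  intro h
  have h2 := ρ.2
  rw [h] at h2
  exact h0 h2

theorem finite_zeros {f : ℂ → ℂ} (hf : Differentiable ℂ f) (h0 : f 0 ≠ 0) (R : ℝ) :
    {ρ : Zeros f | ‖(ρ:ℂ)‖ ≤ R}.Finite := by
  have hA : AnalyticOnNhd ℂ f univ := fun z _ => hf.analyticAt z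
  have h1 : (Metric.closedBall (0:ℂ) R ∩ {z | f z = 0}).Finite := by
    by_contra hinf
    have hinf : (Metric.closedBall (0:ℂ) R ∩ {z | f z = 0}).Infinite := hinf
    obtain ⟨z, hz, hacc⟩ := hinf.exists_accPt_of_subset_isCompact
      (isCompact_closedBall (0:ℂ) R) inter_subset_left
    have hfreq : ∃ᶠ w in 𝓝[≠] z, f w = 0 := by
      rw [accPt_iff_frequently_nhdsNE] at hacc
      exact hacc.mono fun w hw => hw.2
    have := hA.eqOn_zero_of_preconnected_of_frequently_eq_zero isPreconnected_univ
      (mem_univ z) hfreq (mem_univ 0)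
    exact h0 this
  refine Set.Finite.of_finite_image (f := Subtype.val) (h1.subset ?_)
    Subtype.val_injective.injOn
  rintro _ ⟨ρ, hρ, rfl⟩
  exact ⟨by simpa using hρ, ρ.2⟩

/-- Jensen's inequality for an arbitrary finite set of zeros: `Real.posLog` discards those outside the
disc, so the left side is at most the full sum in Jensen's formula. -/
theorem jensen {f : ℂ → ℂ} (hf : Differentiable ℂ f) (h0 : f 0 ≠ 0) {R : ℝ} (hR : 0 < R)
    (F : Finset (Zeros f)) :
    ∑ ρ ∈ F, (mult f ρ : ℝ) * Real.posLog (R / ‖(ρ:ℂ)‖) ≤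
      Real.circleAverage (fun z => Real.log ‖f z‖) 0 R - Real.log ‖f 0‖ := by
  classical
  have hA : AnalyticOnNhd ℂ f (Metric.closedBall 0 |R|) := fun z _ => hf.analyticAt z
  have hJ := AnalyticOnNhd.circleAverage_log_norm hR.ne' hA h0
  set D := MeromorphicOn.divisor f (Metric.closedBall 0 |R|) with hD
  have hval : ∀ u ∈ Metric.closedBall (0:ℂ) |R|, D u = mult f u := by
    intro u hu
    rw [hD, MeromorphicOn.AnalyticOnNhd.divisor_apply hA hu]
    have := order_ne_top hf h0 u
    rw [← Nat.cast_analyticOrderNatAt this]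
    simp
  have hfin : (Function.support fun u => (D u : ℝ) * Real.log (R * ‖0 - u‖⁻¹)).Finite := by
    refine (D.finiteSupport (isCompact_closedBall _ _)).subset ?_
    intro u hu
    simp only [Function.mem_support] at hu ⊢
    intro h; simp [h] at hu
  set G : Finset ℂ := hfin.toFinset ∪ (F.image Subtype.val).filter (fun u => ‖u‖ ≤ R) with hG
  have hsum : (∑ᶠ u, (D u : ℝ) * Real.log (R * ‖0 - u‖⁻¹)) =
      ∑ u ∈ G, (D u : ℝ) * Real.log (R * ‖0 - u‖⁻¹) := by
    apply finsum_eq_sum_of_support_subset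
    intro u hu
    simp only [hG, Finset.coe_union, Set.mem_union, Finset.mem_coe, Set.Finite.mem_toFinset]
    exact Or.inl hu
  rw [hsum] at hJ
  rw [show (fun z => Real.log ‖f z‖) = (Real.log ‖f ·‖) from rfl, hJ, add_sub_cancel_right]
  have hnn : ∀ u ∈ G, 0 ≤ (D u : ℝ) * Real.log (R * ‖0 - u‖⁻¹) := by
    intro u _
    by_cases hu : u ∈ Metric.closedBall (0:ℂ) |R|
    · rw [hval u hu]
      refine mul_nonneg (by positivity) ?_
      rcases eq_or_ne u 0 with rfl | hu0
      · simp
      · apply Real.log_nonneg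
        rw [← div_eq_mul_inv, le_div_iff₀ (by simpa using hu0)]
        simpa [abs_of_pos hR] using hu
    · rw [hD, Function.locallyFinsuppWithin.apply_eq_zero_of_notMem _ hu]; simp
  have hFsum : ∑ ρ ∈ F, (mult f ρ : ℝ) * Real.posLog (R / ‖(ρ:ℂ)‖) =
      ∑ u ∈ F.image Subtype.val, (mult f u : ℝ) * Real.posLog (R / ‖u‖) := by
    rw [Finset.sum_image (fun a _ b _ h => Subtype.ext h)]
  rw [hFsum]
  calc _ = ∑ u ∈ (F.image Subtype.val).filter (fun u => ‖u‖ ≤ R),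
        (mult f u : ℝ) * Real.posLog (R / ‖u‖) := by
        symm
        apply Finset.sum_subset (Finset.filter_subset _ _)
        intro u _ hu
        have hu' : ¬ ‖u‖ ≤ R := by
          intro h; exact hu (Finset.mem_filter.2 ⟨by assumption, h⟩)
        push Not at hu'
        rw [Real.posLog_eq_zero_iff _ |>.2, mul_zero]
        rw [abs_of_nonneg (by positivity)]
        exact (div_le_one (by linarith)).2 hu'.le
    _ = ∑ u ∈ (F.image Subtype.val).filter (fun u => ‖u‖ ≤ R),
        (D u : ℝ) * Real.log (R * ‖0 - u‖⁻¹) := by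
        apply Finset.sum_congr rfl
        intro u hu
        have hu' := (Finset.mem_filter.1 hu).2
        have hu0 : u ≠ 0 := by
          obtain ⟨ρ, _, rfl⟩ := Finset.mem_image.1 (Finset.mem_filter.1 hu).1
          exact zeros_ne_zero h0 ρ
        rw [hval u (by simpa [abs_of_pos hR] using hu'), zero_sub, norm_neg, ← div_eq_mul_inv,
          Real.posLog_eq_log]
        · simp
        · rw [abs_of_nonneg (by positivity)]
          exact (one_le_div (by simpa using hu0)).2 hu'
    _ ≤ _ := by
        apply Finset.sum_le_sum_of_subset_of_nonneg Finset.subset_union_right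
        intro u hu _; exact hnn u hu

/-- Dividing out finitely many zeros, with their full multiplicities. -/
theorem exists_factor {f : ℂ → ℂ} (hf : Differentiable ℂ f) (h0 : f 0 ≠ 0)
    (F : Finset (Zeros f)) :
    ∃ g : ℂ → ℂ, Differentiable ℂ g ∧
      (∀ z, f z = (∏ ρ ∈ F, (1 - z / ρ) ^ mult f ρ) * g z) ∧ ∀ ρ ∈ F, g ρ ≠ 0 := by
  classical
  induction F using Finset.induction_on with
  | empty => exact ⟨f, hf, by simp, by simp⟩
  | insert a F ha ih =>
    obtain ⟨g, hg, hfg, hgF⟩ := ih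
    set P : ℂ → ℂ := fun z => ∏ ρ ∈ F, (1 - z / ρ) ^ mult f ρ with hP
    have hPd : Differentiable ℂ P := by
      intro z
      refine DifferentiableAt.fun_finsetProd fun i _ => ?_
      fun_prop
    have ha0 : (a:ℂ) ≠ 0 := zeros_ne_zero h0 a
    have hPa : P a ≠ 0 := by
      refine Finset.prod_ne_zero_iff.2 fun ρ hρ => pow_ne_zero _ ?_
      have hne : (a:ℂ) ≠ ρ := by
        intro h; exact ha (by rwa [Subtype.ext h])
      have := zeros_ne_zero h0 ρ
      rw [sub_ne_zero]
      intro h; apply hne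
      field_simp at h
      exact h.symm
    have hfeq : f = P * g := funext hfg
    have hord : analyticOrderAt g (a:ℂ) = (mult f a : ℕ) := by
      rw [Nat.cast_analyticOrderNatAt (order_ne_top hf h0 a)]
      have h1 := analyticOrderAt_mul (hPd.analyticAt (a:ℂ)) (hg.analyticAt (a:ℂ))
      rw [← hfeq, (hPd.analyticAt _).analyticOrderAt_eq_zero.2 hPa, zero_add] at h1
      exact h1.symm
    obtain ⟨g1, hg1, hg1a, hev⟩ := (hg.analyticAt (a:ℂ)).analyticOrderAt_eq_natCast.1 hord
    set n := mult f a
    set h : ℂ → ℂ := Function.update (fun z => g z / (1 - z / a) ^ n) a (g1 a * (-a) ^ n) with hh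
    have hne : ∀ z, z ≠ (a:ℂ) → 1 - z / a ≠ 0 := by
      intro z hz
      rw [sub_ne_zero]
      intro h; apply hz
      field_simp at h
      exact h.symm
    have hloc : h =ᶠ[𝓝 (a:ℂ)] fun z => g1 z * (-a) ^ n := by
      filter_upwards [hev] with z hz
      rcases eq_or_ne z a with rfl | hza
      · simp [hh]
      · rw [hh, Function.update_of_ne hza, hz, div_eq_iff (pow_ne_zero _ (hne z hza)), smul_eq_mul,
          mul_assoc, ← mul_pow, mul_comm]
        congr 2
        field_simp
        ring
    have hhz : ∀ z, g z = (1 - z / a) ^ n * h z := by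
      intro z
      rcases eq_or_ne z a with rfl | hza
      · have hga := hev.self_of_nhds
        rw [hga, hh, Function.update_self, div_self ha0, sub_self, sub_self]
        rcases Nat.eq_zero_or_pos n with hn | hn
        · simp [hn]
        · simp [hn.ne']
      · rw [hh, Function.update_of_ne hza]
        field_simp [pow_ne_zero n (hne z hza)]
    refine ⟨h, ?_, ?_, ?_⟩
    · intro z
      rcases eq_or_ne z a with rfl | hza
      · exact (hg1.differentiableAt.mul_const _).congr_of_eventuallyEq hloc
      · have : h =ᶠ[𝓝 z] fun z => g z / (1 - z / a) ^ n := by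
          filter_upwards [isOpen_ne.mem_nhds hza] with w hw
          rw [hh, Function.update_of_ne hw]
        refine DifferentiableAt.congr_of_eventuallyEq ?_ this
        refine (hg z).div (by fun_prop) (pow_ne_zero _ (hne z hza))
    · intro z
      rw [Finset.prod_insert ha, hfg z, hhz z]; ring
    · intro ρ hρ
      rcases Finset.mem_insert.1 hρ with rfl | hρ
      · rw [hh, Function.update_self]
        exact mul_ne_zero hg1a (pow_ne_zero _ (neg_ne_zero.2 ha0))
      · intro h0'
        apply hgF ρ hρ
        rw [hhz, h0', mul_zero]

end RHTheta

/-! ### Partial fractions of the logarithmic derivative -/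

namespace RHTheta
open Complex Set MeasureTheory Filter Topology

/-- If `g` is zero-free on a disc and bounded there in terms of `g 0`, then its logarithmic derivative
varies slowly near the centre: Borel–Carathéodory bounds `log g`, and two Cauchy estimates bound its
first two derivatives. -/
theorem norm_logDeriv_sub_le {g : ℂ → ℂ} (hg : Differentiable ℂ g) {R M : ℝ} (hR : 0 < R)
    (hM : 0 < M) (hne : ∀ z ∈ Metric.ball (0:ℂ) R, g z ≠ 0)
    (hb : ∀ z ∈ Metric.ball (0:ℂ) R, ‖g z‖ ≤ ‖g 0‖ * Real.exp M) {z : ℂ} (hz : ‖z‖ ≤ R / 8) :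
    ‖logDeriv g z - logDeriv g 0‖ ≤ 64 * M / R ^ 2 * ‖z‖ := by
  have h00 : (0:ℂ) ∈ Metric.ball (0:ℂ) R := Metric.mem_ball_self hR
  have hq : DifferentiableOn ℂ (logDeriv g) (Metric.ball 0 R) := by
    intro w hw
    have h1 : DifferentiableAt ℂ (deriv g) w := (hg.analyticAt w).deriv.differentiableAt
    exact (h1.div (hg w) (hne w hw)).differentiableWithinAt
  obtain ⟨L, hL0, hL⟩ := hq.isExactOn_ball.with_val_at 0 0
  have hexp : ∀ w ∈ Metric.ball (0:ℂ) R, g w = g 0 * Complex.exp (L w) := by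
    have hconst : ∀ w ∈ Metric.ball (0:ℂ) R, g w * Complex.exp (-L w) = g 0 * Complex.exp (-L 0) := by
      intro w hw
      have hd : ∀ u ∈ Metric.ball (0:ℂ) R,
          HasDerivAt (fun u => g u * Complex.exp (-L u)) 0 u := by
        intro u hu
        have := (hg u).hasDerivAt.mul ((hL u hu).neg.cexp)
        refine this.congr_deriv ?_
        have h3 := hne u hu
        simp only [logDeriv_apply]
        field_simp
        ring
      exact Metric.isOpen_ball.is_const_of_deriv_eq_zero (convex_ball 0 R).isPreconnected
        (fun u hu => (hd u hu).differentiableAt.differentiableWithinAt)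
        (fun u hu => (hd u hu).deriv) hw h00
    intro w hw
    have := hconst w hw
    rw [hL0, neg_zero, Complex.exp_zero, mul_one] at this
    rw [← this, mul_assoc, ← Complex.exp_add]; simp
  have hLd : DifferentiableOn ℂ L (Metric.ball 0 R) := fun w hw =>
    (hL w hw).differentiableAt.differentiableWithinAt
  have hre : Set.MapsTo L (Metric.ball 0 R) {z | z.re ≤ M} := by
    intro w hw
    have h1 := hb w hw
    rw [hexp w hw, norm_mul, Complex.norm_exp] at h1
    have h2 := le_of_mul_le_mul_left h1 (norm_pos_iff.2 (hne 0 h00))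
    exact Real.exp_le_exp.1 h2
  have hLb : ∀ w, ‖w‖ ≤ R / 2 → ‖L w‖ ≤ 2 * M := by
    intro w hw
    refine (borelCaratheodory_zero hM hLd hre hR (by simpa using by linarith) hL0).trans ?_
    rw [div_le_iff₀ (by linarith)]
    nlinarith
  have hqb : ∀ w, ‖w‖ ≤ R / 4 → ‖logDeriv g w‖ ≤ 8 * M / R := by
    intro w hw
    have hwR : w ∈ Metric.ball (0:ℂ) R := by simpa using by linarith
    rw [← (hL w hwR).deriv]
    have hsub : Metric.closedBall w (R/4) ⊆ Metric.ball 0 R := by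
      intro u hu
      have h1 : ‖u - w‖ ≤ R / 4 := by simpa [dist_eq_norm] using hu
      have h2 := norm_le_norm_sub_add u w
      simpa using by linarith
    have := Complex.norm_deriv_le_of_forall_mem_sphere_norm_le (c := w) (R := R/4) (C := 2*M)
      (by positivity) (hLd.diffContOnCl_ball hsub) (by
        intro u hu
        have h1 : ‖u - w‖ = R / 4 := by simpa [dist_eq_norm] using hu
        have h2 := norm_le_norm_sub_add u w
        exact hLb u (by linarith))
    refine this.trans (le_of_eq ?_)
    field_simp; ring
  have hq2 : ∀ w ∈ Metric.closedBall (0:ℂ) (R/8), ‖deriv (logDeriv g) w‖ ≤ 64 * M / R^2 := by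
    intro w hw
    have hw : ‖w‖ ≤ R / 8 := by simpa using hw
    have hsub : Metric.closedBall w (R/8) ⊆ Metric.ball 0 R := by
      intro u hu
      have h1 : ‖u - w‖ ≤ R / 8 := by simpa [dist_eq_norm] using hu
      have h2 := norm_le_norm_sub_add u w
      simpa using by linarith
    have := Complex.norm_deriv_le_of_forall_mem_sphere_norm_le (c := w) (R := R/8) (C := 8*M/R)
      (by positivity) (hq.diffContOnCl_ball hsub) (by
        intro u hu
        have h1 : ‖u - w‖ = R / 8 := by simpa [dist_eq_norm] using hu
        have h2 := norm_le_norm_sub_add u w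
        exact hqb u (by linarith))
    refine this.trans (le_of_eq ?_)
    field_simp; ring
  have := (convex_closedBall (0:ℂ) (R/8)).norm_image_sub_le_of_norm_deriv_le (f := logDeriv g)
    (fun w hw => (hq w (Metric.closedBall_subset_ball (by linarith) hw)).differentiableAt
      (Metric.isOpen_ball.mem_nhds (Metric.closedBall_subset_ball (by linarith) hw)))
    hq2 (x := 0) (y := z) (Metric.mem_closedBall_self (by positivity)) (by simpa using hz)
  simpa using this

/-- Partial fractions of `f' / f` over the zeros in a disc of radius `R`, with an error term that
vanishes as `R → ∞`. After division by the linear factors at these zeros, the quotient is zero-free on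
the disc, and the maximum principle on the disc of radius `2R`, where each factor has modulus at least
`1` on the boundary, bounds it. -/
theorem logDeriv_partial {f : ℂ → ℂ} (hf : Differentiable ℂ f) (h0 : f 0 ≠ 0) {C : ℝ}
    (hC : 0 < C) (hb : ∀ z, 1 ≤ ‖z‖ → ‖f z‖ ≤ Real.exp (C * ‖z‖ ^ (3/2 : ℝ)))
    {z : ℂ} (hz : f z ≠ 0) {R : ℝ} (hR : 1 ≤ R) (hzR : ‖z‖ ≤ R / 8) (F : Finset (Zeros f))
    (hF : ∀ ρ : Zeros f, ρ ∈ F ↔ ‖(ρ:ℂ)‖ ≤ R) :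
    ‖logDeriv f z - logDeriv f 0 - ∑ ρ ∈ F, (mult f ρ : ℂ) * (z / (ρ * (z - ρ)))‖ ≤
      64 * (C * (2 * R) ^ (3/2:ℝ) + |Real.log ‖f 0‖| + 1) / R ^ 2 * ‖z‖ := by
  obtain ⟨g, hg, hfg, hgF⟩ := exists_factor hf h0 F
  set P : ℂ → ℂ := fun z => ∏ ρ ∈ F, (1 - z / ρ) ^ mult f ρ with hP
  have hPd : Differentiable ℂ P := by
    intro z
    refine DifferentiableAt.fun_finsetProd fun i _ => ?_
    fun_prop
  have hg0 : g 0 = f 0 := by rw [hfg 0]; simp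
  set M := C * (2 * R) ^ (3/2:ℝ) + |Real.log ‖f 0‖| + 1 with hM
  have hMpos : 0 < M := by positivity
  have hgb : ∀ w ∈ Metric.ball (0:ℂ) R, ‖g w‖ ≤ ‖g 0‖ * Real.exp M := by
    intro w hw
    have h1 : ‖g w‖ ≤ Real.exp (C * (2 * R) ^ (3/2:ℝ)) := by
      refine Complex.norm_le_of_forall_mem_frontier_norm_le (U := Metric.ball 0 (2*R))
        Metric.isBounded_ball hg.diffContOnCl ?_ ?_
      · intro u hu
        rw [frontier_ball _ (by positivity)] at hu
        have hu : ‖u‖ = 2 * R := by simpa using hu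
        have h2 : 1 ≤ ‖P u‖ := by
          rw [hP, norm_prod]
          refine Finset.one_le_prod fun ρ hρ => ?_
          rw [norm_pow]
          refine one_le_pow₀ ?_
          have h3 : 2 ≤ ‖u / (ρ:ℂ)‖ := by
            rw [norm_div, hu, le_div_iff₀ (norm_pos_iff.2 (zeros_ne_zero h0 ρ))]
            have := (hF ρ).1 hρ
            linarith
          have h4 := norm_sub_norm_le (u / (ρ:ℂ)) 1
          rw [norm_sub_rev, norm_one] at h4
          linarith
        have h3 := hb u (by linarith)
        rw [hfg u, norm_mul, hu] at h3
        have := mul_le_mul_of_nonneg_right h2 (norm_nonneg (g u))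
        linarith
      · exact subset_closure (Metric.ball_subset_ball (by linarith) hw)
    refine h1.trans ?_
    rw [hg0]
    have hexp : Real.exp (C * (2 * R) ^ (3/2:ℝ)) ≤ Real.exp (Real.log ‖f 0‖) * Real.exp M := ?_
    · rwa [Real.exp_log (norm_pos_iff.2 h0)] at hexp
    rw [← Real.exp_add]
    apply Real.exp_le_exp.2
    have := neg_abs_le (Real.log ‖f 0‖)
    linarith
  have hgne : ∀ w ∈ Metric.ball (0:ℂ) R, g w ≠ 0 := by
    intro w hw hgw
    have hfw : f w = 0 := by rw [hfg w, hgw, mul_zero]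
    have hw' : ‖w‖ < R := by simpa using hw
    exact hgF ⟨w, hfw⟩ ((hF ⟨w, hfw⟩).2 hw'.le) hgw
  have hmain := norm_logDeriv_sub_le hg (by linarith) hMpos hgne hgb hzR
  have hld : ∀ w, f w ≠ 0 → logDeriv f w =
      ∑ ρ ∈ F, (mult f ρ : ℂ) * (1 / (w - ρ)) + logDeriv g w := by
    intro w hw
    have hfe : f = fun w => P w * g w := funext hfg
    have hPw : P w ≠ 0 := fun h => hw (by rw [hfg w]; simp [hP] at h ⊢; left; exact h)
    have hgw : g w ≠ 0 := fun h => hw (by rw [hfg w, h, mul_zero])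
    have h1 : logDeriv f w = logDeriv P w + logDeriv g w := by
      conv_lhs => rw [hfe]
      exact logDeriv_mul (f := P) (g := g) w hPw hgw (hPd w) (hg w)
    rw [h1, hP, logDeriv_prod]
    · congr 1
      refine Finset.sum_congr rfl fun ρ hρ => ?_
      rw [logDeriv_fun_pow (by fun_prop), logDeriv_apply]
      congr 1
      have hρ0 := zeros_ne_zero h0 ρ
      have hwρ : w - ρ ≠ 0 := by
        rw [sub_ne_zero]; rintro rfl; exact hw ρ.2
      have hd : deriv (fun w : ℂ => 1 - w / (ρ:ℂ)) w = - (1 / (ρ:ℂ)) := by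
        have : HasDerivAt (fun w : ℂ => 1 - w / (ρ:ℂ)) (0 - 1 / (ρ:ℂ)) w :=
          (hasDerivAt_const w (1:ℂ)).sub ((hasDerivAt_id w).div_const _)
        rw [this.deriv, zero_sub]
      rw [hd]
      have h2 : (1:ℂ) - w / ρ = -(w - ρ) / ρ := by field_simp; ring
      rw [h2]
      field_simp
    · intro ρ hρ
      exact Finset.prod_ne_zero_iff.1 hPw ρ hρ
    · intro ρ hρ; fun_prop
  have : logDeriv f z - logDeriv f 0 - ∑ ρ ∈ F, (mult f ρ : ℂ) * (z / (ρ * (z - ρ))) =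
      logDeriv g z - logDeriv g 0 := by
    rw [hld z hz, hld 0 h0]
    have : ∑ ρ ∈ F, (mult f ρ : ℂ) * (z / (ρ * (z - ρ))) =
        ∑ ρ ∈ F, (mult f ρ : ℂ) * (1 / (z - ρ)) - ∑ ρ ∈ F, (mult f ρ : ℂ) * (1 / (0 - ρ)) := by
      rw [← Finset.sum_sub_distrib]
      refine Finset.sum_congr rfl fun ρ hρ => ?_
      have hρ0 := zeros_ne_zero h0 ρ
      have hwρ : z - ρ ≠ 0 := by
        rw [sub_ne_zero]; rintro rfl; exact hz ρ.2
      rw [← mul_sub, zero_sub]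
      congr 1
      field_simp
      ring
    rw [this]; ring
  rw [this]
  exact hmain

/-- Hadamard's partial fraction expansion, for entire functions of order at most `3/2` whose zeros
satisfy `∑ 1 / |ρ|² < ∞`. -/
theorem hadamard {f : ℂ → ℂ} (hf : Differentiable ℂ f) (h0 : f 0 ≠ 0) {C : ℝ}
    (hC : 0 < C) (hb : ∀ z, 1 ≤ ‖z‖ → ‖f z‖ ≤ Real.exp (C * ‖z‖ ^ (3/2 : ℝ)))
    (hs : Summable fun ρ : Zeros f => (mult f ρ : ℝ) / ‖(ρ:ℂ)‖ ^ 2)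
    {z : ℂ} (hz : f z ≠ 0) :
    HasSum (fun ρ : Zeros f => (mult f ρ : ℂ) * (z / (ρ * (z - ρ))))
      (logDeriv f z - logDeriv f 0) := by
  have hsum : Summable (fun ρ : Zeros f => (mult f ρ : ℂ) * (z / (ρ * (z - ρ)))) := by
    refine Summable.of_norm_bounded_eventually (hs.mul_left (2 * ‖z‖)) ?_
    refine (finite_zeros hf h0 (2 * ‖z‖)).subset ?_
    intro ρ hρ
    rw [Set.mem_ofPred_eq]
    by_contra hlt
    push Not at hlt
    apply hρ
    change ‖(mult f ρ : ℂ) * (z / (ρ * (z - ρ)))‖ ≤ 2 * ‖z‖ * ((mult f ρ : ℝ) / ‖(ρ:ℂ)‖ ^ 2)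
    have hρ0 : 0 < ‖(ρ:ℂ)‖ := norm_pos_iff.2 (zeros_ne_zero h0 ρ)
    have h1 : ‖(ρ:ℂ)‖ / 2 ≤ ‖z - ρ‖ := by
      have := norm_sub_norm_le (ρ:ℂ) z
      rw [norm_sub_rev] at this
      linarith
    rw [norm_mul, norm_div, norm_mul, Complex.norm_natCast]
    calc _ ≤ (mult f ρ : ℝ) * (‖z‖ / (‖(ρ:ℂ)‖ * (‖(ρ:ℂ)‖ / 2))) := by gcongr
      _ = _ := by field_simp
  set F : ℕ → Finset (Zeros f) := fun n => (finite_zeros hf h0 n).toFinset with hF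
  have hFmem : ∀ n ρ, ρ ∈ F n ↔ ‖(ρ:ℂ)‖ ≤ n := by simp [hF]
  have hFt : Tendsto F atTop atTop := by
    refine tendsto_atTop_finset_of_monotone ?_ ?_
    · intro m n hmn ρ hρ
      rw [hFmem] at hρ ⊢
      exact hρ.trans (by exact_mod_cast hmn)
    · intro ρ
      obtain ⟨n, hn⟩ := exists_nat_ge ‖(ρ:ℂ)‖
      exact ⟨n, (hFmem _ _).2 hn⟩
  have ht1 := hsum.hasSum.comp hFt
  have ht2 : Tendsto (fun n : ℕ => logDeriv f z - logDeriv f 0 -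
      ∑ ρ ∈ F n, (mult f ρ : ℂ) * (z / (ρ * (z - ρ)))) atTop (𝓝 0) := by
    have hlim : Tendsto (fun R : ℝ => 64 * (C * (2 * R) ^ (3/2:ℝ) + |Real.log ‖f 0‖| + 1) / R ^ 2
        * ‖z‖) atTop (𝓝 0) := by
      have e1 : Tendsto (fun R : ℝ => 64 * ‖z‖ * (C * 2 ^ (3/2:ℝ) * R ^ (-(1/2):ℝ) +
          (|Real.log ‖f 0‖| + 1) * R ^ (-(2:ℝ)))) atTop
          (𝓝 (64 * ‖z‖ * (C * 2 ^ (3/2:ℝ) * 0 + (|Real.log ‖f 0‖| + 1) * 0))) := by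
        refine Tendsto.const_mul _ (Tendsto.add (Tendsto.const_mul _ ?_) (Tendsto.const_mul _ ?_))
        · exact tendsto_rpow_neg_atTop (by norm_num)
        · exact tendsto_rpow_neg_atTop (by norm_num)
      simp only [mul_zero, add_zero] at e1
      refine e1.congr' ?_
      filter_upwards [eventually_gt_atTop 0] with R hR
      rw [Real.mul_rpow (by norm_num) hR.le, show (-(1/2):ℝ) = 3/2 - 2 by norm_num,
        Real.rpow_sub hR, Real.rpow_neg hR.le, show (2:ℝ) = ((2:ℕ):ℝ) by norm_num,
        Real.rpow_natCast]
      field_simp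
      ring
    refine squeeze_zero_norm' ?_ (hlim.comp tendsto_natCast_atTop_atTop)
    filter_upwards [eventually_ge_atTop 1, eventually_ge_atTop ⌈8 * ‖z‖⌉₊] with n hn1 hn2
    refine logDeriv_partial hf h0 hC hb hz (by exact_mod_cast hn1) ?_ (F n) (hFmem n)
    have := Nat.ceil_le.1 hn2
    linarith
  have ht3 : Tendsto (fun n : ℕ => ∑ ρ ∈ F n, (mult f ρ : ℂ) * (z / (ρ * (z - ρ)))) atTop
      (𝓝 (logDeriv f z - logDeriv f 0)) := by
    have := tendsto_const_nhds (x := logDeriv f z - logDeriv f 0) |>.sub ht2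
    simpa using this
  have := tendsto_nhds_unique ht1 ht3
  rw [← this]
  exact hsum.hasSum

end RHTheta

/-! ### From Jensen sums to sums of reciprocals -/

namespace RHTheta
open Complex Set MeasureTheory Filter Topology

section ZeroSums

variable {ι : Type*} {m a : ι → ℝ} {A : ℝ}

theorem posLog_kernel_continuousOn (b : ℝ) (k : ℕ) {T U : ℝ} (hT : 1 ≤ T) :
    ContinuousOn (fun r : ℝ => Real.posLog (r / b) * (r ^ k)⁻¹) (Icc T U) := by
  refine ContinuousOn.mul (by fun_prop) (ContinuousOn.inv₀ (by fun_prop) ?_)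
  intro r hr
  have : 0 < r := by linarith [hr.1]
  positivity

theorem posLog_kernel_integrable (b : ℝ) (k : ℕ) {T U : ℝ} (hT : 1 ≤ T) (hTU : T ≤ U) :
    IntervalIntegrable (fun r : ℝ => Real.posLog (r / b) * (r ^ k)⁻¹) volume T U := by
  refine ContinuousOn.intervalIntegrable ?_
  rw [uIcc_of_le hTU]
  exact posLog_kernel_continuousOn b k hT

theorem integral_log_sq {b R : ℝ} (hb : 0 < b) (hbR : b ≤ R) :
    ∫ r in b..R, Real.log (r / b) * (r ^ 2)⁻¹ = 1 / b - (1 + Real.log (R / b)) / R := by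
  have hder : ∀ r ∈ uIcc b R, HasDerivAt (fun r => -(1 + Real.log (r / b)) / r)
      (Real.log (r / b) * (r ^ 2)⁻¹) r := by
    intro r hr
    rw [uIcc_of_le hbR] at hr
    have hr0 : 0 < r := by linarith [hr.1]
    have h1 : HasDerivAt (fun r => Real.log (r / b)) ((1 / b) / (r / b)) r :=
      ((hasDerivAt_id r).div_const b).log (by positivity)
    have h2 := ((h1.const_add 1).neg).fun_div (hasDerivAt_id r) hr0.ne'
    refine h2.congr_deriv ?_
    simp only [id, Pi.neg_apply]
    field_simp
    ring
  rw [intervalIntegral.integral_eq_sub_of_hasDerivAt hder]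
  · rw [div_self hb.ne']; simp; ring
  · refine ContinuousOn.intervalIntegrable ?_
    rw [uIcc_of_le hbR]
    refine ContinuousOn.mul (ContinuousOn.log (by fun_prop) ?_) (ContinuousOn.inv₀ (by fun_prop) ?_)
    all_goals
      intro r hr
      have : 0 < r := by linarith [hr.1]
      positivity

/-- For `1 ≤ b`, two of the three terms already add up to exactly `1 / b`, by `integral_log_sq`; the last
term takes care of `b < 1`. This turns a sum of `1 / b` into integrals of Jensen sums. -/
theorem inv_le_kernel {b R : ℝ} (hb : 1 / 2 ≤ b) (hR : 1 ≤ R) (hbR : b ≤ R) :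
    1 / b ≤ (∫ r in (1:ℝ)..R, Real.posLog (r / b) * (r ^ 2)⁻¹) +
      Real.posLog (Real.exp 1 * R / b) / R + 2 * Real.posLog (Real.exp 1 / b) := by
  have hb0 : 0 < b := by linarith
  have hR0 : 0 < R := by linarith
  have hint : 0 ≤ ∫ r in (1:ℝ)..R, Real.posLog (r / b) * (r ^ 2)⁻¹ :=
    intervalIntegral.integral_nonneg hR fun r hr =>
      mul_nonneg Real.posLog_nonneg (by positivity)
  have h2 : 0 ≤ Real.posLog (Real.exp 1 * R / b) / R := div_nonneg Real.posLog_nonneg hR0.le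
  have h3 : 0 ≤ Real.posLog (Real.exp 1 / b) := Real.posLog_nonneg
  rcases lt_or_ge b 1 with h1 | h1
  · have h4 : 1 / b ≤ 2 := by
      rw [div_le_iff₀ hb0]; linarith
    have h5 : 1 ≤ Real.posLog (Real.exp 1 / b) := by
      have : Real.exp 1 ≤ Real.exp 1 / b := by
        rw [le_div_iff₀ hb0]
        nlinarith [Real.exp_pos 1]
      calc (1:ℝ) = Real.posLog (Real.exp 1) := by
            rw [Real.posLog_eq_log, Real.log_exp]
            rw [abs_of_pos (Real.exp_pos 1)]; exact Real.one_le_exp (by norm_num)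
        _ ≤ _ := Real.posLog_le_posLog (Real.exp_pos 1).le this
    linarith
  · have h4 : ∫ r in b..R, Real.log (r / b) * (r ^ 2)⁻¹ ≤
        ∫ r in (1:ℝ)..R, Real.posLog (r / b) * (r ^ 2)⁻¹ := by
      calc _ = ∫ r in b..R, Real.posLog (r / b) * (r ^ 2)⁻¹ := by
            refine intervalIntegral.integral_congr fun r hr => ?_
            rw [uIcc_of_le hbR] at hr
            have hr0 : 0 < r := by linarith [hr.1]
            rw [Real.posLog_eq_log]
            rw [abs_of_pos (by positivity)]
            exact (one_le_div hb0).2 hr.1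
        _ ≤ _ := by
            refine intervalIntegral.integral_mono_interval h1 hbR le_rfl ?_
              (posLog_kernel_integrable b 2 le_rfl hR)
            filter_upwards with r
            exact mul_nonneg Real.posLog_nonneg (by positivity)
    rw [integral_log_sq hb0 hbR] at h4
    have h5 : Real.posLog (Real.exp 1 * R / b) = 1 + Real.log (R / b) := by
      rw [mul_div_assoc, Real.posLog_eq_log, Real.log_mul (Real.exp_ne_zero 1) (by positivity),
        Real.log_exp]
      rw [abs_of_pos (by positivity)]
      have h6 : 1 ≤ R / b := (one_le_div hb0).2 hbR
      nlinarith [Real.one_le_exp (show (0:ℝ) ≤ 1 by norm_num)]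
    rw [h5]
    linarith

/-- An upper bound for the Jensen sums `∑ m log⁺ (R / a)` bounds `∑ m / a` with the same leading
constant: integrate the bound against `r⁻² dr`. In the application `a` runs over the moduli of the zeros
and `m` over their multiplicities. No asymptotic count of the zeros is needed. -/
theorem sum_inv_le (hm : ∀ i, 0 ≤ m i) (ha : ∀ i, 1 / 2 ≤ a i)
    (hJ : ∀ (F : Finset ι) (R : ℝ), 1 ≤ R →
      ∑ i ∈ F, m i * Real.posLog (R / a i) ≤ R / Real.pi * Real.log R + A * R) :
    ∃ B D : ℝ, ∀ (F : Finset ι) (R : ℝ), 1 ≤ R → (∀ i ∈ F, a i ≤ R) →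
      ∑ i ∈ F, m i / a i ≤ 1 / (2 * Real.pi) * Real.log R ^ 2 + B * Real.log R + D := by
  set e := Real.exp 1
  have he1 : 1 ≤ e := Real.one_le_exp (by norm_num)
  refine ⟨A + e / Real.pi, (e / Real.pi + A * e) + 2 * (e / Real.pi + A * e),
    fun F R hR hF => ?_⟩
  have hR0 : 0 < R := by linarith
  have h1 : ∑ i ∈ F, m i / a i ≤ ∑ i ∈ F, ((∫ r in (1:ℝ)..R, m i * Real.posLog (r / a i) * (r ^ 2)⁻¹) +
      (m i * Real.posLog (e * R / a i)) / R + 2 * (m i * Real.posLog (e / a i))) := by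
    refine Finset.sum_le_sum fun i hi => ?_
    have := mul_le_mul_of_nonneg_left (inv_le_kernel (ha i) hR (hF i hi)) (hm i)
    simp only [mul_assoc]
    rw [intervalIntegral.integral_const_mul]
    calc m i / a i = m i * (1 / a i) := by ring
      _ ≤ _ := this
      _ = _ := by ring
  refine h1.trans ?_
  rw [Finset.sum_add_distrib, Finset.sum_add_distrib, ← Finset.sum_div, ← Finset.mul_sum,
    ← intervalIntegral.integral_finsetSum (fun i _ => by
      simp only [mul_assoc]
      exact (posLog_kernel_integrable (a i) 2 le_rfl hR).const_mul _)]
  have h2 := hJ F (e * R) (by nlinarith)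
  have h3 := hJ F e he1
  rw [Real.log_mul (Real.exp_ne_zero 1) hR0.ne', Real.log_exp] at h2
  rw [Real.log_exp, mul_one] at h3
  have h2' : (∑ i ∈ F, m i * Real.posLog (e * R / a i)) / R ≤
      e / Real.pi * (1 + Real.log R) + A * e := by
    rw [div_le_iff₀ hR0]
    refine h2.trans (le_of_eq ?_)
    ring
  have h4 : ∫ r in (1:ℝ)..R, ∑ i ∈ F, m i * Real.posLog (r / a i) * (r ^ 2)⁻¹ ≤
      ∫ r in (1:ℝ)..R, (1 / Real.pi * Real.log r + A) * r⁻¹ := by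
    refine intervalIntegral.integral_mono_on hR ?_ ?_ ?_
    · rw [← Finset.sum_fn]
      refine IntervalIntegrable.sum _ fun i _ => ?_
      simp only [mul_assoc]
      exact (posLog_kernel_integrable (a i) 2 le_rfl hR).const_mul _
    · refine ContinuousOn.intervalIntegrable ?_
      rw [uIcc_of_le hR]
      have h0 : ∀ r ∈ Icc (1:ℝ) R, r ≠ 0 := fun r hr => by linarith [hr.1]
      exact ((continuousOn_const.mul (Real.continuousOn_log.mono h0)).add
        continuousOn_const).mul (continuousOn_id.inv₀ h0)
    · intro r hr
      have hr0 : 0 < r := by linarith [hr.1]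
      rw [← Finset.sum_mul]
      calc _ ≤ (r / Real.pi * Real.log r + A * r) * (r^2)⁻¹ := by
            have := hJ F r hr.1
            gcongr
        _ = _ := by field_simp
  have h5 : ∫ r in (1:ℝ)..R, (1 / Real.pi * Real.log r + A) * r⁻¹ =
      1 / (2 * Real.pi) * Real.log R ^ 2 + A * Real.log R := by
    have h0 : ∀ r ∈ Icc (1:ℝ) R, r ≠ 0 := fun r hr => by linarith [hr.1]
    have hder : ∀ r ∈ uIcc 1 R, HasDerivAt
        (fun r => 1 / (2 * Real.pi) * Real.log r ^ 2 + A * Real.log r)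
        ((1 / Real.pi * Real.log r + A) * r⁻¹) r := by
      intro r hr
      rw [uIcc_of_le hR] at hr
      have hl := Real.hasDerivAt_log (h0 r hr)
      refine (((hl.fun_pow 2).const_mul _).add (hl.const_mul A)).congr_deriv ?_
      have := h0 r hr
      push_cast
      field_simp
    rw [intervalIntegral.integral_eq_sub_of_hasDerivAt hder]
    · simp
    · refine ContinuousOn.intervalIntegrable ?_
      rw [uIcc_of_le hR]
      exact ((continuousOn_const.mul (Real.continuousOn_log.mono h0)).add
        continuousOn_const).mul (continuousOn_id.inv₀ h0)
  calc _ ≤ (1 / (2 * Real.pi) * Real.log R ^ 2 + A * Real.log R) +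
        (e / Real.pi * (1 + Real.log R) + A * e) + 2 * (e / Real.pi + A * e) := by
        have h45 := h4.trans h5.le
        have h3' : ∑ i ∈ F, m i * Real.posLog (e / a i) ≤ e / Real.pi + A * e := h3
        linarith
    _ = _ := by ring

theorem integral_log_tail {T U : ℝ} (hT : 1 ≤ T) (hTU : T ≤ U) (hA : 0 ≤ A) :
    ∫ r in T..U, (1 / Real.pi * Real.log r + A) * (r ^ 2)⁻¹ ≤ (1 + A) * (1 + Real.log T) / T := by
  have h0 : ∀ r ∈ Icc T U, 0 < r := fun r hr => by linarith [hr.1]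
  have hder : ∀ r ∈ uIcc T U, HasDerivAt
      (fun r => -(1 / Real.pi * (1 + Real.log r) + A) / r)
      ((1 / Real.pi * Real.log r + A) * (r ^ 2)⁻¹) r := by
    intro r hr
    rw [uIcc_of_le hTU] at hr
    have hr0 := h0 r hr
    have hl := Real.hasDerivAt_log hr0.ne'
    have h2 := ((((hl.const_add 1).const_mul (1 / Real.pi)).add_const A).neg).fun_div
      (hasDerivAt_id r) hr0.ne'
    refine h2.congr_deriv ?_
    simp only [id, Pi.neg_apply]
    field_simp
    ring
  rw [intervalIntegral.integral_eq_sub_of_hasDerivAt hder]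
  · have hT0 : 0 < T := by linarith
    have hU0 : 0 < U := by linarith
    have hlU : 0 ≤ Real.log U := Real.log_nonneg (by linarith)
    have hlT : 0 ≤ Real.log T := Real.log_nonneg (by linarith)
    have e1 : -(1 / Real.pi * (1 + Real.log U) + A) / U ≤ 0 :=
      div_nonpos_of_nonpos_of_nonneg (by
        have : 0 ≤ 1 / Real.pi * (1 + Real.log U) := by positivity
        linarith) hU0.le
    have hpi : 1 / Real.pi ≤ 1 := by
      rw [div_le_one Real.pi_pos]; linarith [Real.pi_gt_three]
    have e2 : (1 / Real.pi * (1 + Real.log T) + A) / T ≤ (1 + A) * (1 + Real.log T) / T := by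
      gcongr
      nlinarith
    rw [neg_div] at *
    rw [neg_div]
    linarith
  · refine ContinuousOn.intervalIntegrable ?_
    rw [uIcc_of_le hTU]
    have h0' : ∀ r ∈ Icc T U, r ≠ 0 := fun r hr => (h0 r hr).ne'
    exact ((continuousOn_const.mul (Real.continuousOn_log.mono h0')).add
        continuousOn_const).mul ((continuousOn_id.pow 2).inv₀ fun r hr => pow_ne_zero 2 (h0' r hr))

/-- The corresponding tail bound for `∑ m / a²`: integrate the bound on Jensen sums against `r⁻³ dr`,
where `log⁺ (r / a) ≥ 1` on `[e a, 2 e a]`. -/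
theorem sum_inv_sq_le (hm : ∀ i, 0 ≤ m i) (hA : 0 ≤ A)
    (hJ : ∀ (F : Finset ι) (R : ℝ), 1 ≤ R →
      ∑ i ∈ F, m i * Real.posLog (R / a i) ≤ R / Real.pi * Real.log R + A * R) :
    ∃ D : ℝ, 0 ≤ D ∧ ∀ (F : Finset ι) (T : ℝ), 1 ≤ T → (∀ i ∈ F, T < a i) →
      ∑ i ∈ F, m i / a i ^ 2 ≤ D * (1 + Real.log T) / T := by
  set e := Real.exp 1
  have he1 : 1 ≤ e := Real.one_le_exp (by norm_num)
  refine ⟨8 * e ^ 2 * (1 + A), by positivity, fun F T hT hF => ?_⟩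
  obtain ⟨U, hTU, hU⟩ : ∃ U, T ≤ U ∧ ∀ i ∈ F, 2 * e * a i ≤ U := by
    refine ⟨max T (∑ i ∈ F, 2 * e * a i), le_max_left _ _, fun i hi => le_trans ?_ (le_max_right _ _)⟩
    refine Finset.single_le_sum (f := fun i => 2 * e * a i) (fun j hj => ?_) hi
    have := hF j hj
    have : 0 ≤ a j := by linarith
    positivity
  have h1 : ∑ i ∈ F, m i / a i ^ 2 ≤
      ∑ i ∈ F, 8 * e ^ 2 * ∫ r in T..U, m i * Real.posLog (r / a i) * (r ^ 3)⁻¹ := by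
    refine Finset.sum_le_sum fun i hi => ?_
    have hai : 0 < a i := by linarith [hF i hi]
    have h2 : ∫ r in (e * a i)..(2 * e * a i), ((2 * e * a i) ^ 3)⁻¹ ≤
        ∫ r in T..U, Real.posLog (r / a i) * (r ^ 3)⁻¹ := by
      have hle : e * a i ≤ 2 * e * a i := by nlinarith
      have hTe : T ≤ e * a i := by nlinarith [hF i hi]
      calc _ ≤ ∫ r in (e * a i)..(2 * e * a i), Real.posLog (r / a i) * (r ^ 3)⁻¹ := by
            refine intervalIntegral.integral_mono_on hle (by simp)
              (posLog_kernel_integrable (a i) 3 (hT.trans hTe) hle) fun r hr => ?_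
            have hr0 : 0 < r := lt_of_lt_of_le (by positivity) hr.1
            have h3 : 1 ≤ Real.posLog (r / a i) := by
              calc (1:ℝ) = Real.posLog e := by
                    rw [Real.posLog_eq_log, Real.log_exp]
                    rwa [abs_of_pos (Real.exp_pos 1)]
                _ ≤ _ := Real.posLog_le_posLog (Real.exp_pos 1).le (by
                    rw [le_div_iff₀ hai]; exact hr.1)
            calc ((2 * e * a i) ^ 3)⁻¹ ≤ 1 * (r ^ 3)⁻¹ := by
                  rw [one_mul]
                  exact inv_anti₀ (by positivity) (by gcongr; exact hr.2)
              _ ≤ _ := by gcongr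
        _ ≤ _ := by
            refine intervalIntegral.integral_mono_interval hTe hle (hU i hi) ?_
              (posLog_kernel_integrable (a i) 3 hT hTU)
            filter_upwards [ae_restrict_mem measurableSet_Ioc] with r hr
            have hr0 : 0 < r := by linarith [hr.1]
            exact mul_nonneg Real.posLog_nonneg (by positivity)
    rw [intervalIntegral.integral_const, smul_eq_mul] at h2
    simp only [mul_assoc (m i)]
    rw [intervalIntegral.integral_const_mul]
    calc m i / a i ^ 2 = 8 * e ^ 2 * (m i * ((2 * e * a i - e * a i) * ((2 * e * a i) ^ 3)⁻¹)) := by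
          have : e ≠ 0 := Real.exp_ne_zero 1
          field_simp
          ring
      _ ≤ _ := by
          have := hm i
          gcongr
  refine h1.trans ?_
  rw [← Finset.mul_sum, ← intervalIntegral.integral_finsetSum (fun i _ => by
      simp only [mul_assoc]
      exact (posLog_kernel_integrable (a i) 3 hT hTU).const_mul _)]
  have h4 : ∫ r in T..U, ∑ i ∈ F, m i * Real.posLog (r / a i) * (r ^ 3)⁻¹ ≤
      ∫ r in T..U, (1 / Real.pi * Real.log r + A) * (r ^ 2)⁻¹ := by
    refine intervalIntegral.integral_mono_on hTU ?_ ?_ ?_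
    · rw [← Finset.sum_fn]
      refine IntervalIntegrable.sum _ fun i _ => ?_
      simp only [mul_assoc]
      exact (posLog_kernel_integrable (a i) 3 hT hTU).const_mul _
    · refine ContinuousOn.intervalIntegrable ?_
      rw [uIcc_of_le hTU]
      have h0 : ∀ r ∈ Icc T U, r ≠ 0 := fun r hr => by linarith [hr.1]
      exact ((continuousOn_const.mul (Real.continuousOn_log.mono h0)).add
        continuousOn_const).mul ((continuousOn_id.pow 2).inv₀ fun r hr => pow_ne_zero 2 (h0 r hr))
    · intro r hr
      have hr0 : 0 < r := by linarith [hr.1]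
      rw [← Finset.sum_mul]
      calc _ ≤ (r / Real.pi * Real.log r + A * r) * (r^3)⁻¹ := by
            have := hJ F r (hT.trans hr.1)
            gcongr
        _ = _ := by field_simp
  calc _ ≤ 8 * e ^ 2 * ((1 + A) * (1 + Real.log T) / T) := by
        have := h4.trans (integral_log_tail hT hTU hA)
        gcongr
    _ = _ := by ring

end ZeroSums

end RHTheta

/-! ### Zeros of `(s - 1) ζ(s)` -/

namespace RHTheta
open Complex Set MeasureTheory Filter Topology

theorem integral_max_neg_cos : ∫ θ in (0:ℝ)..(2 * Real.pi), max (-Real.cos θ) 0 = 2 := by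
  have hpi := Real.pi_pos
  have hc : Continuous fun θ => max (-Real.cos θ) 0 := by fun_prop
  have h1 : ∫ θ in (0:ℝ)..(Real.pi/2), max (-Real.cos θ) 0 = 0 := by
    rw [intervalIntegral.integral_congr (g := fun _ => 0)]
    · simp
    · intro θ hθ
      rw [uIcc_of_le (by positivity)] at hθ
      have := Real.cos_nonneg_of_neg_pi_div_two_le_of_le (by linarith [hθ.1]) hθ.2
      exact max_eq_right (by linarith)
  have h2 : ∫ θ in (Real.pi/2)..(Real.pi + Real.pi/2), max (-Real.cos θ) 0 = 2 := by
    rw [intervalIntegral.integral_congr (g := fun θ => -Real.cos θ)]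
    · rw [intervalIntegral.integral_neg, integral_cos, Real.sin_pi_div_two, add_comm Real.pi,
        Real.sin_add_pi, Real.sin_pi_div_two]; norm_num
    · intro θ hθ
      rw [uIcc_of_le (by linarith)] at hθ
      have := Real.cos_nonpos_of_pi_div_two_le_of_le hθ.1 hθ.2
      exact max_eq_left (by linarith)
  have h3 : ∫ θ in (Real.pi + Real.pi/2)..(2*Real.pi), max (-Real.cos θ) 0 = 0 := by
    rw [intervalIntegral.integral_congr (g := fun _ => 0)]
    · simp
    · intro θ hθ
      rw [uIcc_of_le (by linarith)] at hθ
      have := Real.cos_nonneg_of_neg_pi_div_two_le_of_le (x := θ - 2 * Real.pi)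
        (by linarith [hθ.1]) (by linarith [hθ.2])
      rw [Real.cos_sub_two_pi] at this
      exact max_eq_right (by linarith)
  rw [← intervalIntegral.integral_add_adjacent_intervals (hc.intervalIntegrable _ (Real.pi/2))
    (hc.intervalIntegrable _ _), ← intervalIntegral.integral_add_adjacent_intervals
    (hc.intervalIntegrable (Real.pi/2) (Real.pi + Real.pi/2)) (hc.intervalIntegrable _ _),
    h1, h2, h3]
  norm_num

/-- The mean over the circle of radius `R` of the growth bound of `exists_growth`. Only the left
half-circle contributes to the leading term, whence the constant `1 / π`. -/
theorem circleAverage_growth {R C : ℝ} (hR : 1 ≤ R) :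
    Real.circleAverage (fun z : ℂ => max (-z.re) 0 * Real.log R + C * R) 0 R =
      R / Real.pi * Real.log R + C * R := by
  have hR0 : 0 ≤ R := by linarith
  rw [Real.circleAverage_def]
  have : ∀ θ : ℝ, max (-(circleMap 0 R θ).re) 0 * Real.log R + C * R =
      (R * Real.log R) * max (-Real.cos θ) 0 + C * R := by
    intro θ
    rw [circleMap_zero_re, ← mul_neg, ← mul_zero R, ← mul_max_of_nonneg _ _ hR0, mul_zero]
    ring
  simp only [this]
  rw [intervalIntegral.integral_add, intervalIntegral.integral_const_mul, integral_max_neg_cos,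
    intervalIntegral.integral_const, smul_eq_mul, smul_eq_mul]
  · have := Real.pi_ne_zero
    field_simp
    ring
  · exact Continuous.intervalIntegrable (by fun_prop) _ _
  · simp

theorem zeta₁_zero : riemannZeta₁ 0 = 1 / 2 := by
  have := riemannZeta_eq_inv_sub_mul (s := 0) (by norm_num)
  rw [riemannZeta_zero] at this
  norm_num at this
  rw [← this]

theorem zeta₁_zero_ne : riemannZeta₁ 0 ≠ 0 := by rw [zeta₁_zero]; norm_num

/-- Jensen's inequality for `(s - 1) ζ(s)`. -/
theorem exists_jensen_zeta : ∃ A : ℝ, 0 ≤ A ∧ ∀ (F : Finset (Zeros riemannZeta₁)) (R : ℝ), 1 ≤ R →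
    ∑ ρ ∈ F, (mult riemannZeta₁ ρ : ℝ) * Real.posLog (R / ‖(ρ:ℂ)‖) ≤
      R / Real.pi * Real.log R + A * R := by
  obtain ⟨C, hC, hg⟩ := exists_growth
  refine ⟨C + 1, by linarith, fun F R hR => ?_⟩
  have hR0 : 0 < R := by linarith
  refine (jensen differentiable_riemannZeta₁ zeta₁_zero_ne hR0 F).trans ?_
  have h1 : Real.circleAverage (fun z => Real.log ‖riemannZeta₁ z‖) 0 R ≤
      R / Real.pi * Real.log R + C * R := by
    rw [← circleAverage_growth hR]
    refine Real.circleAverage_mono ?_ ?_ ?_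
    · exact MeromorphicOn.circleIntegrable_log_norm fun z _ =>
        (differentiable_riemannZeta₁.analyticAt z).meromorphicAt
    · refine ContinuousOn.circleIntegrable' ?_
      fun_prop
    · intro z hz
      have hz : ‖z‖ = R := by simpa [abs_of_pos hR0] using hz
      have hb := hg z (by rw [hz]; exact hR)
      rw [hz] at hb
      have hnn : 0 ≤ max (-z.re) 0 * Real.log R + C * R := by
        have := le_max_right (-z.re) 0
        have := Real.log_nonneg hR
        positivity
      rcases eq_or_ne (riemannZeta₁ z) 0 with h0 | h0
      · simp only [h0, norm_zero, Real.log_zero]; exact hnn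
      · exact (Real.log_le_iff_le_exp (norm_pos_iff.2 h0)).2 hb
  have h2 : -Real.log ‖riemannZeta₁ 0‖ ≤ 1 := by
    rw [zeta₁_zero]
    have : ‖(1/2 : ℂ)‖ = 2⁻¹ := by norm_num
    rw [this, Real.log_inv, neg_neg]
    linarith [Real.log_two_lt_d9]
  nlinarith

/-- The growth bound in the weaker form that `hadamard` requires. -/
theorem exists_growth' : ∃ C : ℝ, 0 < C ∧ ∀ z : ℂ, 1 ≤ ‖z‖ →
    ‖riemannZeta₁ z‖ ≤ Real.exp (C * ‖z‖ ^ (3/2 : ℝ)) := by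
  obtain ⟨C, hC, hg⟩ := exists_growth
  refine ⟨C + 2, by linarith, fun z hz => (hg z hz).trans (Real.exp_le_exp.2 ?_)⟩
  set R := ‖z‖
  have hR0 : 0 < R := by linarith
  have h1 : max (-z.re) 0 ≤ R := max_le ((neg_le_abs _).trans (abs_re_le_norm z)) hR0.le
  have h2 : Real.log R ≤ R ^ (1/2:ℝ) / (1/2) := Real.log_le_rpow_div hR0.le (by norm_num)
  have h3 : R ^ (3/2:ℝ) = R * R ^ (1/2:ℝ) := by
    rw [show (3/2:ℝ) = 1 + 1/2 by norm_num, Real.rpow_add hR0, Real.rpow_one]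
  have h4 : 1 ≤ R ^ (1/2:ℝ) := Real.one_le_rpow hz (by norm_num)
  have h5 : 0 ≤ Real.log R := Real.log_nonneg hz
  calc _ ≤ R * (R ^ (1/2:ℝ) / (1/2)) + C * R * R ^ (1/2:ℝ) := by
        have := mul_le_mul h1 h2 h5 hR0.le
        have := le_mul_of_one_le_right (show 0 ≤ C * R by positivity) h4
        linarith
    _ = _ := by rw [h3]; ring

/-- The zeros of `(s - 1) ζ(s)` comprise the trivial zeros as well; they are kept in all sums. -/
theorem zeros_cases (hRH : RiemannHypothesis) (ρ : Zeros riemannZeta₁) :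
    (ρ:ℂ).re = 1 / 2 ∨ ∃ n : ℕ, (ρ:ℂ) = -2 * (n + 1) := by
  have h1 : (ρ:ℂ) ≠ 1 := by
    intro h
    have h2 := ρ.2
    rw [h, riemannZeta₁_one] at h2
    exact one_ne_zero h2
  have h2 : riemannZeta ρ = 0 := by rw [riemannZeta_eq_inv_sub_mul h1, ρ.2, mul_zero]
  by_cases h3 : ∃ n : ℕ, (ρ:ℂ) = -2 * (n + 1)
  · exact Or.inr h3
  · exact Or.inl (hRH ρ h2 h3 h1)

theorem zeros_re_le (hRH : RiemannHypothesis) (ρ : Zeros riemannZeta₁) : (ρ:ℂ).re ≤ 1 / 2 := by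
  rcases zeros_cases hRH ρ with h | ⟨n, h⟩
  · exact h.le
  · rw [h]
    have : ((-2 : ℂ) * (n + 1)).re = -2 * ((n:ℝ) + 1) := by simp
    rw [this]
    have : (0:ℝ) ≤ n := n.cast_nonneg
    linarith

theorem half_le_norm_zeros (hRH : RiemannHypothesis) (ρ : Zeros riemannZeta₁) :
    1 / 2 ≤ ‖(ρ:ℂ)‖ := by
  refine le_trans ?_ (abs_re_le_norm _)
  rcases zeros_cases hRH ρ with h | ⟨n, h⟩
  · rw [h]; exact le_abs_self _
  · rw [h]
    have : ((-2 : ℂ) * (n + 1)).re = -2 * ((n:ℝ) + 1) := by simp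
    rw [this]
    have : (0:ℝ) ≤ n := n.cast_nonneg
    rw [abs_of_nonpos (by linarith)]
    linarith

theorem norm_zeros_add_one (hRH : RiemannHypothesis) (ρ : Zeros riemannZeta₁) :
    ‖(ρ:ℂ)‖ / 2 ≤ ‖(ρ:ℂ) + 1‖ := by
  rcases zeros_cases hRH ρ with h | ⟨n, h⟩
  · have : ‖(ρ:ℂ)‖ ≤ ‖(ρ:ℂ) + 1‖ := by
      rw [Complex.norm_def, Complex.norm_def]
      apply Real.sqrt_le_sqrt
      rw [Complex.normSq_apply, Complex.normSq_apply]
      simp [h]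
      norm_num
    linarith [norm_nonneg (ρ:ℂ)]
  · have h2 : 2 ≤ ‖(ρ:ℂ)‖ := by
      refine le_trans ?_ (abs_re_le_norm _)
      rw [h]
      have : ((-2 : ℂ) * (n + 1)).re = -2 * ((n:ℝ) + 1) := by simp
      rw [this]
      have : (0:ℝ) ≤ n := n.cast_nonneg
      rw [abs_of_nonpos (by linarith)]
      linarith
    have h3 := norm_sub_norm_le (ρ:ℂ) (-1)
    rw [sub_neg_eq_add, norm_neg, norm_one] at h3
    linarith

theorem exists_sum_inv_le (hRH : RiemannHypothesis) :
    ∃ B D : ℝ, ∀ (F : Finset (Zeros riemannZeta₁)) (R : ℝ), 1 ≤ R → (∀ ρ ∈ F, ‖(ρ:ℂ)‖ ≤ R) →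
      ∑ ρ ∈ F, (mult riemannZeta₁ ρ : ℝ) / ‖(ρ:ℂ)‖ ≤
        1 / (2 * Real.pi) * Real.log R ^ 2 + B * Real.log R + D := by
  obtain ⟨A, _, hJ⟩ := exists_jensen_zeta
  exact sum_inv_le (m := fun ρ : Zeros riemannZeta₁ => (mult riemannZeta₁ ρ : ℝ))
    (a := fun ρ => ‖(ρ:ℂ)‖) (fun _ => by positivity) (half_le_norm_zeros hRH) hJ

theorem exists_sum_inv_sq_le :
    ∃ D : ℝ, 0 ≤ D ∧ ∀ (F : Finset (Zeros riemannZeta₁)) (T : ℝ), 1 ≤ T →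
      (∀ ρ ∈ F, T < ‖(ρ:ℂ)‖) →
      ∑ ρ ∈ F, (mult riemannZeta₁ ρ : ℝ) / ‖(ρ:ℂ)‖ ^ 2 ≤ D * (1 + Real.log T) / T := by
  obtain ⟨A, hA, hJ⟩ := exists_jensen_zeta
  exact sum_inv_sq_le (m := fun ρ : Zeros riemannZeta₁ => (mult riemannZeta₁ ρ : ℝ))
    (a := fun ρ => ‖(ρ:ℂ)‖) (fun _ => by positivity) hA hJ

theorem summable_inv_sq :
    Summable fun ρ : Zeros riemannZeta₁ => (mult riemannZeta₁ ρ : ℝ) / ‖(ρ:ℂ)‖ ^ 2 := by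
  classical
  obtain ⟨D, hD, h⟩ := exists_sum_inv_sq_le
  set f := fun ρ : Zeros riemannZeta₁ => (mult riemannZeta₁ ρ : ℝ) / ‖(ρ:ℂ)‖ ^ 2
  have hf : ∀ ρ, 0 ≤ f ρ := fun ρ => by positivity
  set G := (finite_zeros differentiable_riemannZeta₁ zeta₁_zero_ne 1).toFinset with hG
  refine summable_of_sum_le (c := ∑ ρ ∈ G, f ρ + D) hf fun F => ?_
  rw [← Finset.sum_filter_add_sum_filter_not F (fun ρ => ‖(ρ:ℂ)‖ ≤ 1)]
  refine add_le_add ?_ ?_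
  · refine Finset.sum_le_sum_of_subset_of_nonneg ?_ fun ρ _ _ => hf ρ
    intro ρ hρ
    simpa [hG] using (Finset.mem_filter.1 hρ).2
  · have := h (F.filter fun ρ => ¬ ‖(ρ:ℂ)‖ ≤ 1) 1 le_rfl fun ρ hρ => by
      simpa using (Finset.mem_filter.1 hρ).2
    simpa using this

/-- Partial fractions for the logarithmic derivative of `(s - 1) ζ(s)`. -/
theorem hadamard_zeta {s : ℂ} (hs : riemannZeta₁ s ≠ 0) :
    HasSum (fun ρ : Zeros riemannZeta₁ => (mult riemannZeta₁ ρ : ℂ) * (s / (ρ * (s - ρ))))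
      (logDeriv riemannZeta₁ s - logDeriv riemannZeta₁ 0) := by
  obtain ⟨C, hC, hb⟩ := exists_growth'
  exact hadamard differentiable_riemannZeta₁ zeta₁_zero_ne hC hb summable_inv_sq hs

end RHTheta

/-! ### Moments on a vertical line -/

namespace RHTheta
open Complex Set MeasureTheory Filter Topology

theorem norm_kernel {s : ℂ} (hs : s.re = 2) {x : ℝ} (hx : 0 < x) :
    ‖(x:ℂ) ^ (-s - 2)‖ = x ^ (-4:ℝ) := by
  rw [Complex.norm_cpow_eq_rpow_re_of_pos hx]
  congr 1
  simp [hs]; norm_num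

theorem continuousOn_kernel (w : ℂ) : ContinuousOn (fun x : ℝ => (x:ℂ) ^ w) (Ioi 1) := by
  intro x hx
  have hx : (1:ℝ) < x := hx
  exact (Complex.continuousAt_ofReal_cpow_const x w (Or.inr (by linarith))).continuousWithinAt

/-- On the line `Re s = 2` the moment kernel has modulus `x^(-4)`, so functions of size `x^(5/2)` are
integrable against it. -/
theorem integrable_of_bound {v : ℝ → ℂ} (hv : ContinuousOn v (Ioi 1)) {K : ℝ}
    (hb : ∀ x, 1 < x → ‖v x‖ ≤ K * x ^ (5/2:ℝ)) {s : ℂ} (hs : s.re = 2) :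
    IntegrableOn (fun x : ℝ => (x:ℂ) ^ (-s - 2) * v x) (Ioi 1) := by
  have hint : IntegrableOn (fun x : ℝ => K * x ^ (-(3/2):ℝ)) (Ioi 1) :=
    (integrableOn_Ioi_rpow_of_lt (by norm_num) one_pos).const_mul K
  refine Integrable.mono' hint
    (((continuousOn_kernel _).mul hv).aestronglyMeasurable measurableSet_Ioi) ?_
  filter_upwards [ae_restrict_mem measurableSet_Ioi] with x hx
  have hx : (1:ℝ) < x := hx
  have hx0 : 0 < x := by linarith
  rw [norm_mul, norm_kernel hs hx0]
  calc _ ≤ x ^ (-4:ℝ) * (K * x ^ (5/2:ℝ)) := by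
        have := hb x hx
        gcongr
    _ = K * (x ^ (-4:ℝ) * x ^ (5/2:ℝ)) := by ring
    _ = _ := by rw [← Real.rpow_add hx0]; norm_num

theorem norm_tsum_le_bound {ι : Type*} {u : ι → ℝ → ℂ} {b : ι → ℝ} (hb : Summable b)
    (hbound : ∀ i x, 1 < x → ‖u i x‖ ≤ b i * x ^ (5/2:ℝ)) {x : ℝ} (hx : 1 < x) :
    ‖∑' i, u i x‖ ≤ (∑' i, b i) * x ^ (5/2:ℝ) := by
  rw [← tsum_mul_right]
  exact tsum_of_norm_bounded (hb.mul_right _).hasSum fun i => hbound i x hx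

theorem continuousOn_tsum_bound {ι : Type*} {u : ι → ℝ → ℂ} {b : ι → ℝ} (hb : Summable b)
    (hb0 : ∀ i, 0 ≤ b i) (hu : ∀ i, ContinuousOn (u i) (Ioi 1))
    (hbound : ∀ i x, 1 < x → ‖u i x‖ ≤ b i * x ^ (5/2:ℝ)) :
    ContinuousOn (fun x => ∑' i, u i x) (Ioi 1) := by
  intro x hx
  have hx : (1:ℝ) < x := hx
  have h1 : ContinuousOn (fun x => ∑' i, u i x) (Ioo 1 (x+1)) := by
    refine continuousOn_tsum (u := fun i => b i * (x+1) ^ (5/2:ℝ))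
      (fun i => (hu i).mono fun y hy => hy.1) (hb.mul_right _) fun i y hy => ?_
    refine (hbound i y hy.1).trans ?_
    have := hb0 i
    have h2 : 0 ≤ y := by linarith [hy.1]
    have h3 := hy.2.le
    gcongr
  exact (h1.continuousAt (Ioo_mem_nhds hx (by linarith))).continuousWithinAt

/-- Moments may be computed term by term. -/
theorem hasSum_moment {ι : Type*} [Countable ι] {u : ι → ℝ → ℂ} {b : ι → ℝ} (hb : Summable b)
    (hu : ∀ i, ContinuousOn (u i) (Ioi 1))
    (hbound : ∀ i x, 1 < x → ‖u i x‖ ≤ b i * x ^ (5/2:ℝ)) {s : ℂ} (hs : s.re = 2) :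
    HasSum (fun i => ∫ x in Ioi (1:ℝ), (x:ℂ) ^ (-s - 2) * u i x)
      (∫ x in Ioi (1:ℝ), (x:ℂ) ^ (-s - 2) * ∑' i, u i x) := by
  refine hasSum_integral_of_dominated_convergence (fun i x => b i * x ^ (-(3/2):ℝ))
    (fun i => ((continuousOn_kernel _).mul (hu i)).aestronglyMeasurable measurableSet_Ioi)
    (fun i => ?_) ?_ ?_ ?_
  · filter_upwards [ae_restrict_mem measurableSet_Ioi] with x hx
    have hx : (1:ℝ) < x := hx
    have hx0 : 0 < x := by linarith
    rw [norm_mul, norm_kernel hs hx0]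
    calc _ ≤ x ^ (-4:ℝ) * (b i * x ^ (5/2:ℝ)) := by
          have := hbound i x hx
          gcongr
      _ = b i * (x ^ (-4:ℝ) * x ^ (5/2:ℝ)) := by ring
      _ = _ := by rw [← Real.rpow_add hx0]; norm_num
  · filter_upwards with x using hb.mul_right _
  · simp only [tsum_mul_right]
    exact (integrableOn_Ioi_rpow_of_lt (by norm_num) one_pos).const_mul _
  · filter_upwards [ae_restrict_mem measurableSet_Ioi] with x hx
    have hx : (1:ℝ) < x := hx
    refine HasSum.mul_left _ (Summable.hasSum ?_)
    exact Summable.of_norm_bounded (hb.mul_right _) fun i => hbound i x hx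

theorem moment_cpow {w s : ℂ} (hs : s.re = 2) (hw : w.re < 3) {c : ℝ} (hc : 1 ≤ c) :
    IntegrableOn (fun x : ℝ => (x:ℂ) ^ (-s - 2) * (x:ℂ) ^ w) (Ioi c) ∧
    ∫ x in Ioi c, (x:ℂ) ^ (-s - 2) * (x:ℂ) ^ w = (c:ℂ) ^ (w - s - 1) / (s + 1 - w) := by
  have hc0 : 0 < c := by linarith
  have h1 : ∀ x ∈ Ioi c, (x:ℂ) ^ (-s - 2 + w) = (x:ℂ) ^ (-s - 2) * (x:ℂ) ^ w := by
    intro x hx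
    have hx : c < x := hx
    rw [Complex.cpow_add]
    exact_mod_cast (by linarith : x ≠ 0)
  have hre : (-s - 2 + w).re < -1 := by simp [hs]; linarith
  refine ⟨(integrableOn_Ioi_cpow_of_lt hre hc0).congr_fun h1 measurableSet_Ioi, ?_⟩
  rw [← setIntegral_congr_fun measurableSet_Ioi h1, integral_Ioi_cpow_of_lt hre hc0,
    show -s - 2 + w + 1 = -(s + 1 - w) by ring, show w - s - 1 = -(s + 1 - w) by ring,
    neg_div_neg_eq]

/-- The moment of a ramp `(x - c)⁺`. -/
theorem moment_ramp {s : ℂ} (hs : s.re = 2) {c : ℝ} (hc : 1 ≤ c) :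
    ∫ x in Ioi (1:ℝ), (x:ℂ) ^ (-s - 2) * ((max (x - c) 0 : ℝ) : ℂ) =
      (c:ℂ) ^ (-s) / (s * (s + 1)) := by
  have hc0 : 0 < c := by linarith
  have hcc : (c:ℂ) ≠ 0 := by exact_mod_cast hc0.ne'
  have e1 : ∫ x in Ioi (1:ℝ), (x:ℂ) ^ (-s - 2) * ((max (x - c) 0 : ℝ) : ℂ) =
      ∫ x in Ioi c, (x:ℂ) ^ (-s - 2) * ((max (x - c) 0 : ℝ) : ℂ) := by
    refine setIntegral_eq_of_subset_of_forall_sdiff_eq_zero measurableSet_Ioi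
      (Ioi_subset_Ioi hc) fun x hx => ?_
    have : x ≤ c := by simpa using hx.2
    rw [max_eq_right (by linarith)]; simp
  have h1 := moment_cpow (w := 1) hs (by simp) hc
  have h0 := moment_cpow (w := 0) hs (by simp) hc
  have e2 : ∫ x in Ioi c, (x:ℂ) ^ (-s - 2) * ((max (x - c) 0 : ℝ) : ℂ) =
      ∫ x in Ioi c, ((x:ℂ) ^ (-s - 2) * (x:ℂ) ^ (1:ℂ) -
        c * ((x:ℂ) ^ (-s - 2) * (x:ℂ) ^ (0:ℂ))) := by
    refine setIntegral_congr_fun measurableSet_Ioi fun x hx => ?_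
    have hx : c < x := hx
    rw [max_eq_left (by linarith), Complex.cpow_one, Complex.cpow_zero]
    push_cast; ring
  rw [e1, e2, integral_sub h1.1 (h0.1.const_mul _), integral_const_mul, h1.2, h0.2]
  have hs0 : s ≠ 0 := by intro h; simp [h] at hs
  have hs1 : s + 1 ≠ 0 := by
    intro h
    have := congrArg Complex.re h
    simp [hs] at this; norm_num at this
  rw [show (1:ℂ) - s - 1 = -s by ring, show (0:ℂ) - s - 1 = -s - 1 by ring,
    Complex.cpow_sub _ _ hcc, Complex.cpow_one, show s + 1 - 1 = s by ring, sub_zero]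
  field_simp
  ring

theorem moment_quad {s : ℂ} (hs : s.re = 2) :
    ∫ x in Ioi (1:ℝ), (x:ℂ) ^ (-s - 2) * (((x:ℂ) - 1) ^ 2 / 2) =
      1 / ((s - 1) * s * (s + 1)) := by
  have h2 := moment_cpow (w := 2) hs (by simp; norm_num) le_rfl
  have h1 := moment_cpow (w := 1) hs (by simp) le_rfl
  have h0 := moment_cpow (w := 0) hs (by simp) le_rfl
  have e2 : ∫ x in Ioi (1:ℝ), (x:ℂ) ^ (-s - 2) * (((x:ℂ) - 1) ^ 2 / 2) =
      ∫ x in Ioi (1:ℝ), ((1/2) * ((x:ℂ) ^ (-s - 2) * (x:ℂ) ^ (2:ℂ)) -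
        (x:ℂ) ^ (-s - 2) * (x:ℂ) ^ (1:ℂ) + (1/2) * ((x:ℂ) ^ (-s - 2) * (x:ℂ) ^ (0:ℂ))) := by
    refine setIntegral_congr_fun measurableSet_Ioi fun x _ => ?_
    simp only [Complex.cpow_one, Complex.cpow_zero, Complex.cpow_ofNat]
    ring
  have hint : IntegrableOn (fun x : ℝ => (1/2) * ((x:ℂ) ^ (-s - 2) * (x:ℂ) ^ (2:ℂ)) -
        (x:ℂ) ^ (-s - 2) * (x:ℂ) ^ (1:ℂ)) (Ioi 1) := (h2.1.const_mul _).sub h1.1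
  rw [e2, integral_add hint (h0.1.const_mul _), integral_sub (h2.1.const_mul _) h1.1, integral_const_mul, integral_const_mul, h2.2, h1.2, h0.2]
  have hs0 : s ≠ 0 := by intro h; simp [h] at hs
  have hs1 : s + 1 ≠ 0 := by
    intro h
    have := congrArg Complex.re h
    simp [hs] at this; norm_num at this
  have hs2 : s - 1 ≠ 0 := by
    intro h
    have := congrArg Complex.re h
    simp [hs] at this; norm_num at this
  simp only [Complex.ofReal_one, Complex.one_cpow]
  rw [show s + 1 - 2 = s - 1 by ring, show s + 1 - 1 = s by ring, sub_zero]
  field_simp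
  ring

/-- The moment of the contribution of a zero `ρ` (without its multiplicity). -/
theorem moment_zero {s ρ : ℂ} (hs : s.re = 2) (hρ : ρ.re < 2) (h0 : ρ ≠ 0) (h1 : ρ + 1 ≠ 0) :
    ∫ x in Ioi (1:ℝ), (x:ℂ) ^ (-s - 2) * (((x:ℂ) ^ (ρ + 1) - 1) / (ρ * (ρ + 1))) =
      1 / (ρ * (s - ρ) * (s + 1)) := by
  have m1 := moment_cpow (w := ρ + 1) hs (by simp; linarith) le_rfl
  have m0 := moment_cpow (w := 0) hs (by simp) le_rfl
  have e2 : ∫ x in Ioi (1:ℝ), (x:ℂ) ^ (-s - 2) * (((x:ℂ) ^ (ρ + 1) - 1) / (ρ * (ρ + 1))) =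
      ∫ x in Ioi (1:ℝ), (1 / (ρ * (ρ + 1))) * ((x:ℂ) ^ (-s - 2) * (x:ℂ) ^ (ρ + 1) -
        (x:ℂ) ^ (-s - 2) * (x:ℂ) ^ (0:ℂ)) := by
    refine setIntegral_congr_fun measurableSet_Ioi fun x _ => ?_
    simp only [Complex.cpow_zero]
    ring
  rw [e2, integral_const_mul, integral_sub m1.1 m0.1, m1.2, m0.2]
  have hs1 : s + 1 ≠ 0 := by
    intro h
    have := congrArg Complex.re h
    simp [hs] at this; norm_num at this
  have hs2 : s - ρ ≠ 0 := by
    intro h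
    have := congrArg Complex.re h
    simp [hs] at this; linarith
  simp only [Complex.ofReal_one, Complex.one_cpow]
  rw [show s + 1 - (ρ + 1) = s - ρ by ring, sub_zero]
  field_simp
  ring

/-- A continuous function on `(1, ∞)` of moderate growth whose moments on a vertical line vanish is
zero, by Mellin inversion. -/
theorem eq_zero_of_moments {v : ℝ → ℂ} (hv : ContinuousOn v (Ioi 1)) {K : ℝ}
    (hb : ∀ x, 1 < x → ‖v x‖ ≤ K * x ^ (5/2:ℝ))
    (hm : ∀ s : ℂ, s.re = 2 → ∫ x in Ioi (1:ℝ), (x:ℂ) ^ (-s - 2) * v x = 0) {x : ℝ} (hx : 1 < x) :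
    v x = 0 := by
  set f : ℝ → ℂ := (Ioi 1).indicator v with hf
  have hind : ∀ w : ℂ, (fun t : ℝ => (t : ℂ) ^ (w - 1) • f t) =
      (Ioi 1).indicator fun t : ℝ => (t : ℂ) ^ (-(-w - 1) - 2) * v t := by
    intro w
    ext t
    by_cases ht : t ∈ Ioi (1:ℝ)
    · rw [indicator_of_mem ht, hf, indicator_of_mem ht, smul_eq_mul]
      congr 2; ring
    · rw [indicator_of_notMem ht, hf, indicator_of_notMem ht, smul_zero]
  have hsub : Ioi (1:ℝ) ⊆ Ioi 0 := Ioi_subset_Ioi zero_le_one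
  have hconv : MellinConvergent f (((-3:ℝ)):ℂ) := by
    unfold MellinConvergent
    rw [hind, IntegrableOn, integrable_indicator_iff measurableSet_Ioi, IntegrableOn,
      Measure.restrict_restrict measurableSet_Ioi, inter_eq_self_of_subset_left hsub]
    exact integrable_of_bound hv hb (by simp; norm_num)
  have hmel : ∀ w : ℂ, w.re = -3 → mellin f w = 0 := by
    intro w hw
    unfold mellin
    rw [hind, integral_indicator measurableSet_Ioi,
      Measure.restrict_restrict measurableSet_Ioi, inter_eq_self_of_subset_left hsub]
    exact hm _ (by simp [hw]; norm_num)
  have hline : ∀ y : ℝ, mellin f (((-3:ℝ):ℂ) + y * Complex.I) = 0 := fun y =>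
    hmel _ (by simp)
  have hcont : ContinuousAt f x := by
    have h1 : f =ᶠ[𝓝 x] v := by
      filter_upwards [Ioi_mem_nhds hx] with t ht
      exact indicator_of_mem ht v
    exact (hv.continuousAt (Ioi_mem_nhds hx)).congr h1.symm
  have := mellinInv_mellin_eq (-3) f (by linarith) hconv (by
    unfold VerticalIntegrable
    simp only [hline]
    exact integrable_zero _ _ _) hcont
  rw [mellinInv] at this
  simp only [hline] at this
  simp only [smul_zero, integral_zero] at this
  rw [hf, indicator_of_mem (mem_Ioi.2 hx)] at this
  exact this.symm

end RHTheta

/-! ### The explicit formula for the primitive of `ψ` -/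

namespace RHTheta
open Complex Set MeasureTheory Filter Topology
open scoped ArithmeticFunction.vonMangoldt LSeries.notation

/-- The primitive `∑ Λ(n) (x - n)⁺` of Chebyshev's function `ψ`. -/
noncomputable def psiOne (x : ℝ) : ℝ := ∑' n : ℕ, Λ n * max (x - n) 0

/-- The contribution of the zero `ρ` to the explicit formula for `psiOne x`. Subtracting `1` makes it
vanish at `x = 1`, as all the other terms do. -/
noncomputable def zeroTerm (ρ : Zeros riemannZeta₁) (x : ℝ) : ℂ :=
  (mult riemannZeta₁ ρ : ℂ) * (((x:ℂ) ^ ((ρ:ℂ) + 1) - 1) / (ρ * (ρ + 1)))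

instance : Countable (Zeros riemannZeta₁) := by
  rw [← Set.countable_univ_iff]
  have : (univ : Set (Zeros riemannZeta₁)) = ⋃ n : ℕ, {ρ : Zeros riemannZeta₁ | ‖(ρ:ℂ)‖ ≤ n} := by
    symm
    rw [eq_univ_iff_forall]
    intro ρ
    obtain ⟨n, hn⟩ := exists_nat_ge ‖(ρ:ℂ)‖
    exact mem_iUnion.2 ⟨n, hn⟩
  rw [this]
  exact countable_iUnion fun n =>
    (finite_zeros differentiable_riemannZeta₁ zeta₁_zero_ne n).countable

theorem zeros_add_one_ne (hRH : RiemannHypothesis) (ρ : Zeros riemannZeta₁) : (ρ:ℂ) + 1 ≠ 0 := by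
  have h1 := norm_zeros_add_one hRH ρ
  have h2 := half_le_norm_zeros hRH ρ
  intro h
  rw [h, norm_zero] at h1
  linarith

/-- Under the Riemann Hypothesis `|x^(ρ+1)| ≤ x^(3/2)`; the exponent `5/2` is a common bound for all
the terms of the explicit formula. -/
theorem norm_zeroTerm_le (hRH : RiemannHypothesis) (ρ : Zeros riemannZeta₁) {x : ℝ} (hx : 1 < x) :
    ‖zeroTerm ρ x‖ ≤ 4 * ((mult riemannZeta₁ ρ : ℝ) / ‖(ρ:ℂ)‖ ^ 2) * x ^ (5/2:ℝ) := by
  have hx0 : 0 < x := by linarith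
  have hρ : 0 < ‖(ρ:ℂ)‖ := by linarith [half_le_norm_zeros hRH ρ]
  have h1 : ‖(x:ℂ) ^ ((ρ:ℂ) + 1) - 1‖ ≤ 2 * x ^ (5/2:ℝ) := by
    refine (norm_sub_le _ _).trans ?_
    rw [Complex.norm_cpow_eq_rpow_re_of_pos hx0, norm_one]
    have h2 : x ^ ((ρ:ℂ) + 1).re ≤ x ^ (5/2:ℝ) := by
      apply Real.rpow_le_rpow_of_exponent_le hx.le
      have := zeros_re_le hRH ρ
      simp; linarith
    have h3 : 1 ≤ x ^ (5/2:ℝ) := Real.one_le_rpow hx.le (by norm_num)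
    linarith
  unfold zeroTerm
  rw [norm_mul, norm_div, norm_mul, Complex.norm_natCast]
  have h2 := norm_zeros_add_one hRH ρ
  calc _ ≤ (mult riemannZeta₁ ρ : ℝ) * (2 * x ^ (5/2:ℝ) / (‖(ρ:ℂ)‖ * (‖(ρ:ℂ)‖ / 2))) := by gcongr
    _ = _ := by field_simp; ring

theorem continuousOn_zeroTerm (ρ : Zeros riemannZeta₁) : ContinuousOn (zeroTerm ρ) (Ioi 1) := by
  unfold zeroTerm
  exact continuousOn_const.mul (((continuousOn_kernel _).sub continuousOn_const).div_const _)

theorem norm_psiTerm_le (n : ℕ) {x : ℝ} (hx : 1 < x) :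
    ‖((Λ n * max (x - n) 0 : ℝ) : ℂ)‖ ≤ ‖LSeries.term ↗Λ (3/2) n‖ * x ^ (5/2:ℝ) := by
  have hx0 : 0 < x := by linarith
  rw [Complex.norm_real, Real.norm_of_nonneg (mul_nonneg ArithmeticFunction.vonMangoldt_nonneg
    (le_max_right _ _)), LSeries.norm_term_eq]
  rcases Nat.eq_zero_or_pos n with rfl | hn
  · simp
  · have hn0 : (0:ℝ) < n := by exact_mod_cast hn
    rw [if_neg hn.ne', Complex.norm_real,
      Real.norm_of_nonneg ArithmeticFunction.vonMangoldt_nonneg]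
    have hre : ((3/2:ℂ)).re = 3/2 := by norm_num
    rw [hre, div_mul_eq_mul_div, mul_div_assoc]
    refine mul_le_mul_of_nonneg_left ?_ ArithmeticFunction.vonMangoldt_nonneg
    rcases le_or_gt x n with h | h
    · rw [max_eq_right (by linarith)]; positivity
    · rw [max_eq_left (by linarith), le_div_iff₀ (by positivity)]
      calc (x - n) * (n:ℝ) ^ (3/2:ℝ) ≤ x * x ^ (3/2:ℝ) := by
            gcongr
            linarith
        _ = x ^ (5/2:ℝ) := by
            rw [show (5/2:ℝ) = 1 + 3/2 by norm_num, Real.rpow_add hx0, Real.rpow_one]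

theorem summable_psiBound : Summable fun n : ℕ => ‖LSeries.term ↗Λ (3/2) n‖ :=
  (ArithmeticFunction.LSeriesSummable_vonMangoldt (s := 3/2) (by norm_num)).norm

theorem summable_psiTerm {x : ℝ} (hx : 1 < x) : Summable fun n : ℕ => Λ n * max (x - n) 0 := by
  have : Summable fun n : ℕ => ((Λ n * max (x - n) 0 : ℝ) : ℂ) :=
    Summable.of_norm_bounded (summable_psiBound.mul_right _) fun n => norm_psiTerm_le n hx
  exact_mod_cast this

theorem summable_zeroBound :
    Summable fun ρ : Zeros riemannZeta₁ => 4 * ((mult riemannZeta₁ ρ : ℝ) / ‖(ρ:ℂ)‖ ^ 2) :=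
  summable_inv_sq.mul_left 4

theorem summable_zeroTerm (hRH : RiemannHypothesis) {x : ℝ} (hx : 1 < x) :
    Summable fun ρ => zeroTerm ρ x :=
  Summable.of_norm_bounded (summable_zeroBound.mul_right _) fun ρ => norm_zeroTerm_le hRH ρ hx

/-- The moments of the terms of the explicit formula balance. -/
theorem moment_identity {s S : ℂ} (hs : 1 < s.re)
    (hS : HasSum (fun ρ : Zeros riemannZeta₁ =>
      (mult riemannZeta₁ ρ : ℂ) * (1 / (ρ * (s - ρ) * (s + 1)))) S) :
    LSeries ↗Λ s / (s * (s + 1)) - 1 / ((s - 1) * s * (s + 1)) +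
      logDeriv riemannZeta₁ 0 * (1 / (s * (s + 1))) + S = 0 := by
  have hs0 : s ≠ 0 := by rintro rfl; simp at hs; linarith
  have hs1 : s + 1 ≠ 0 := by
    intro h
    have := congrArg Complex.re h
    simp at this; linarith
  have hs2 : s - 1 ≠ 0 := by
    intro h
    have := congrArg Complex.re h
    simp at this; linarith
  have hs3 : s ≠ 1 := sub_ne_zero.1 hs2
  have hz : riemannZeta s ≠ 0 := riemannZeta_ne_zero_of_one_lt_re hs
  have hf : riemannZeta₁ s ≠ 0 := by
    intro h
    apply hz
    rw [riemannZeta_eq_inv_sub_mul hs3, h, mul_zero]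
  have hH := (hadamard_zeta hf).mul_right (1 / (s * (s + 1)))
  have hSeq : S = (logDeriv riemannZeta₁ s - logDeriv riemannZeta₁ 0) * (1 / (s * (s + 1))) := by
    refine hS.unique (hH.congr_fun ?_)
    intro ρ
    have h1 : (ρ:ℂ) ≠ 0 := zeros_ne_zero zeta₁_zero_ne ρ
    have h2 : s - ρ ≠ 0 := by
      rw [sub_ne_zero]; rintro rfl; exact hf ρ.2
    field_simp
  have hlog : logDeriv riemannZeta s = logDeriv riemannZeta₁ s - 1 / (s - 1) := by
    have h1 : riemannZeta =ᶠ[𝓝 s] fun w => (w - 1)⁻¹ * riemannZeta₁ w := by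
      filter_upwards [isOpen_ne.mem_nhds hs3] with w hw
      exact riemannZeta_eq_inv_sub_mul hw
    have h2 : logDeriv riemannZeta s = logDeriv (fun w => (w - 1)⁻¹ * riemannZeta₁ w) s := by
      rw [logDeriv_apply, logDeriv_apply, h1.deriv_eq, h1.self_of_nhds]
    have hd : HasDerivAt (fun w : ℂ => (w - 1)⁻¹) (-1 / (s - 1) ^ 2) s :=
      ((hasDerivAt_id s).sub_const 1).fun_inv hs2
    rw [h2, logDeriv_mul (f := fun w : ℂ => (w - 1)⁻¹) s (inv_ne_zero hs2) hf
      hd.differentiableAt (differentiable_riemannZeta₁ s), logDeriv_apply, hd.deriv]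
    field_simp
    ring
  rw [ArithmeticFunction.LSeries_vonMangoldt_eq_deriv_riemannZeta_div hs, hSeq]
  have : -deriv riemannZeta s / riemannZeta s = -(logDeriv riemannZeta₁ s - 1 / (s - 1)) := by
    rw [← hlog, logDeriv_apply, neg_div]
  rw [this]
  field_simp
  ring

/-- The explicit formula for the primitive of `ψ`. -/
theorem explicit_formula (hRH : RiemannHypothesis) {x : ℝ} (hx : 1 < x) :
    (psiOne x : ℂ) = ((x:ℂ) - 1) ^ 2 / 2 - logDeriv riemannZeta₁ 0 * ((x:ℂ) - 1) -
      ∑' ρ, zeroTerm ρ x := by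
  set B := logDeriv riemannZeta₁ 0
  set p : ℕ → ℝ → ℂ := fun n x => ((Λ n * max (x - n) 0 : ℝ) : ℂ) with hp
  have hpc : ∀ n, ContinuousOn (p n) (Ioi 1) := fun n =>
    (Complex.continuous_ofReal.comp (by fun_prop)).continuousOn
  have hpb : ∀ n x, 1 < x → ‖p n x‖ ≤ ‖LSeries.term ↗Λ (3/2) n‖ * x ^ (5/2:ℝ) :=
    fun n x hx => norm_psiTerm_le n hx
  have hzb : ∀ (ρ : Zeros riemannZeta₁) x, 1 < x → ‖zeroTerm ρ x‖ ≤
      4 * ((mult riemannZeta₁ ρ : ℝ) / ‖(ρ:ℂ)‖ ^ 2) * x ^ (5/2:ℝ) :=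
    fun ρ x hx => norm_zeroTerm_le hRH ρ hx
  set P : ℝ → ℂ := fun x => ∑' n, p n x with hP
  set Z : ℝ → ℂ := fun x => ∑' ρ, zeroTerm ρ x with hZ
  have cP : ContinuousOn P (Ioi 1) :=
    continuousOn_tsum_bound summable_psiBound (fun _ => norm_nonneg _) hpc hpb
  have cZ : ContinuousOn Z (Ioi 1) :=
    continuousOn_tsum_bound summable_zeroBound (fun _ => by positivity) continuousOn_zeroTerm hzb
  set Q : ℝ → ℂ := fun x => ((x:ℂ) - 1) ^ 2 / 2 with hQ
  set N : ℝ → ℂ := fun x => ((max (x - 1) 0 : ℝ) : ℂ) with hN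
  have cQ : ContinuousOn Q (Ioi 1) := by
    apply Continuous.continuousOn; fun_prop
  have cN : ContinuousOn N (Ioi 1) := by
    apply Continuous.continuousOn
    exact Complex.continuous_ofReal.comp (by fun_prop)
  have bP : ∀ x, 1 < x → ‖P x‖ ≤ (∑' n, ‖LSeries.term ↗Λ (3/2) n‖) * x ^ (5/2:ℝ) :=
    fun x hx => norm_tsum_le_bound summable_psiBound hpb hx
  have bZ : ∀ x, 1 < x → ‖Z x‖ ≤ (∑' ρ : Zeros riemannZeta₁,
      4 * ((mult riemannZeta₁ ρ : ℝ) / ‖(ρ:ℂ)‖ ^ 2)) * x ^ (5/2:ℝ) :=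
    fun x hx => norm_tsum_le_bound summable_zeroBound hzb hx
  have hpow : ∀ x : ℝ, 1 < x → x ≤ x ^ (5/2:ℝ) ∧ x ^ 2 ≤ x ^ (5/2:ℝ) := by
    intro x hx
    refine ⟨?_, ?_⟩
    · conv_lhs => rw [← Real.rpow_one x]
      exact Real.rpow_le_rpow_of_exponent_le hx.le (by norm_num)
    · rw [← Real.rpow_natCast]
      exact Real.rpow_le_rpow_of_exponent_le hx.le (by norm_num)
  have bN : ∀ x, 1 < x → ‖N x‖ ≤ 1 * x ^ (5/2:ℝ) := by
    intro x hx
    rw [hN]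
    simp only
    rw [Complex.norm_real, max_eq_left (by linarith), Real.norm_of_nonneg (by linarith)]
    linarith [(hpow x hx).1]
  have bQ : ∀ x, 1 < x → ‖Q x‖ ≤ 1 * x ^ (5/2:ℝ) := by
    intro x hx
    have : Q x = (((x - 1) ^ 2 / 2 : ℝ) : ℂ) := by rw [hQ]; push_cast; rfl
    rw [this, Complex.norm_real, Real.norm_of_nonneg (by positivity)]
    nlinarith [(hpow x hx).2]
  set v : ℝ → ℂ := fun x => P x - Q x + B * N x + Z x with hv
  have cv : ContinuousOn v (Ioi 1) := ((cP.sub cQ).add (continuousOn_const.mul cN)).add cZ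
  have hzero : v x = 0 := by
    refine eq_zero_of_moments cv (K := (∑' n, ‖LSeries.term ↗Λ (3/2) n‖) + 1 + ‖B‖ * 1 +
      ∑' ρ : Zeros riemannZeta₁, 4 * ((mult riemannZeta₁ ρ : ℝ) / ‖(ρ:ℂ)‖ ^ 2)) ?_ ?_ hx
    · intro x hx
      have h1 : ‖v x‖ ≤ ‖P x‖ + ‖Q x‖ + ‖B‖ * ‖N x‖ + ‖Z x‖ := by
        rw [hv]
        refine (norm_add_le _ _).trans (add_le_add_left ((norm_add_le _ _).trans ?_) _)
        rw [norm_mul]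
        exact add_le_add_left (norm_sub_le _ _) _
      have := mul_le_mul_of_nonneg_left (bN x hx) (norm_nonneg B)
      linarith [bP x hx, bQ x hx, bZ x hx]
    · intro s hs
      have iP := integrable_of_bound cP bP hs
      have iQ := integrable_of_bound cQ bQ hs
      have iN := integrable_of_bound cN bN hs
      have iZ := integrable_of_bound cZ bZ hs
      have e : ∀ x : ℝ, (x:ℂ) ^ (-s - 2) * v x = (x:ℂ) ^ (-s - 2) * P x - (x:ℂ) ^ (-s - 2) * Q x +
          B * ((x:ℂ) ^ (-s - 2) * N x) + (x:ℂ) ^ (-s - 2) * Z x := by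
        intro x; rw [hv]; ring
      have i1 : IntegrableOn (fun x : ℝ => (x:ℂ) ^ (-s - 2) * P x - (x:ℂ) ^ (-s - 2) * Q x)
        (Ioi 1) := iP.sub iQ
      have i2 : IntegrableOn (fun x : ℝ => (x:ℂ) ^ (-s - 2) * P x - (x:ℂ) ^ (-s - 2) * Q x +
        B * ((x:ℂ) ^ (-s - 2) * N x)) (Ioi 1) := i1.add (iN.const_mul B)
      simp only [e]
      rw [integral_add i2 iZ, integral_add i1 (iN.const_mul B), integral_sub iP iQ,
        integral_const_mul]
      have mQ := moment_quad hs
      have mN := moment_ramp hs le_rfl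
      rw [Complex.ofReal_one, Complex.one_cpow] at mN
      have mP : ∫ x in Ioi (1:ℝ), (x:ℂ) ^ (-s - 2) * P x = LSeries ↗Λ s / (s * (s + 1)) := by
        have h1 := hasSum_moment summable_psiBound hpc hpb hs
        have h2 := ((ArithmeticFunction.LSeriesSummable_vonMangoldt (s := s)
          (by rw [hs]; norm_num)).hasSum).div_const (s * (s + 1))
        refine h1.unique (h2.congr_fun fun n => ?_)
        rcases Nat.eq_zero_or_pos n with rfl | hn
        · simp [hp]
        · have h3 := moment_ramp hs (c := n) (by exact_mod_cast hn)
          rw [LSeries.term_of_ne_zero hn.ne']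
          have : ∀ x : ℝ, (x:ℂ) ^ (-s - 2) * p n x =
              (Λ n : ℂ) * ((x:ℂ) ^ (-s - 2) * ((max (x - n) 0 : ℝ) : ℂ)) := by
            intro x; rw [hp]; push_cast; ring
          simp only [this]
          rw [integral_const_mul, h3, Complex.cpow_neg, Complex.ofReal_natCast]
          ring
      have mZ := hasSum_moment summable_zeroBound continuousOn_zeroTerm hzb hs
      have mZ' : HasSum (fun ρ : Zeros riemannZeta₁ =>
          (mult riemannZeta₁ ρ : ℂ) * (1 / (ρ * (s - ρ) * (s + 1))))
          (∫ x in Ioi (1:ℝ), (x:ℂ) ^ (-s - 2) * Z x) := by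
        refine mZ.congr_fun fun ρ => ?_
        have h3 := moment_zero hs (ρ := ρ) (by linarith [zeros_re_le hRH ρ])
          (zeros_ne_zero zeta₁_zero_ne ρ) (zeros_add_one_ne hRH ρ)
        rw [← h3, ← integral_const_mul]
        congr 1
        ext x
        rw [zeroTerm]; ring
      rw [mP, mQ, mN]
      exact moment_identity (by rw [hs]; norm_num) mZ'
  have hNx : N x = (x:ℂ) - 1 := by
    rw [hN]; simp only; rw [max_eq_left (by linarith)]; push_cast; rfl
  have hPx : P x = (psiOne x : ℂ) := by
    rw [hP, psiOne, Complex.ofReal_tsum]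
  rw [← hPx]
  have : P x - Q x + B * N x + Z x = 0 := hzero
  rw [hNx] at this
  linear_combination this

end RHTheta

/-! ### The estimate for `ψ` and `ϑ` -/

namespace RHTheta
open Complex Set MeasureTheory Filter Topology
open scoped ArithmeticFunction.vonMangoldt

/-- Lower half of the comparison of `ψ` with difference quotients of its primitive. -/
theorem mul_psi_le {x h : ℝ} (hx : 1 < x) (hh : 0 ≤ h) :
    h * Chebyshev.psi x ≤ psiOne (x + h) - psiOne x := by
  have s1 := summable_psiTerm (x := x + h) (by linarith)
  have s2 := summable_psiTerm hx
  have hd : ∀ n : ℕ, 0 ≤ Λ n * max (x + h - n) 0 - Λ n * max (x - n) 0 := by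
    intro n
    rw [← mul_sub]
    refine mul_nonneg ArithmeticFunction.vonMangoldt_nonneg (sub_nonneg.2 ?_)
    exact max_le_max (by linarith) le_rfl
  rw [psiOne, psiOne, ← s1.tsum_sub s2, Chebyshev.psi, Finset.mul_sum]
  refine le_trans (Finset.sum_le_sum fun n hn => ?_)
    ((s1.sub s2).sum_le_tsum (Finset.Ioc 0 ⌊x⌋₊) fun n _ => hd n)
  have hnx : (n:ℝ) ≤ x := (Nat.le_floor_iff (by linarith)).1 (Finset.mem_Ioc.1 hn).2
  rw [max_eq_left (by linarith), max_eq_left (by linarith)]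
  apply le_of_eq; ring

/-- Upper half of the comparison of `ψ` with difference quotients of its primitive. -/
theorem le_mul_psi {x h : ℝ} (hx : 1 < x - h) (hh : 0 ≤ h) :
    psiOne x - psiOne (x - h) ≤ h * Chebyshev.psi x := by
  have s1 := summable_psiTerm (x := x) (by linarith)
  have s2 := summable_psiTerm hx
  rw [psiOne, psiOne, ← s1.tsum_sub s2, Chebyshev.psi, Finset.mul_sum,
    tsum_eq_sum (s := Finset.Ioc 0 ⌊x⌋₊)]
  · refine Finset.sum_le_sum fun n hn => ?_
    have hnx : (n:ℝ) ≤ x := (Nat.le_floor_iff (by linarith)).1 (Finset.mem_Ioc.1 hn).2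
    rw [← mul_sub, mul_comm h]
    refine mul_le_mul_of_nonneg_left ?_ ArithmeticFunction.vonMangoldt_nonneg
    rw [max_eq_left (by linarith : (0:ℝ) ≤ x - n)]
    linarith [le_max_left (x - h - n) 0]
  · intro n hn
    rcases Nat.eq_zero_or_pos n with rfl | hn0
    · simp
    · have : x < n := by
        by_contra! hc
        exact hn (Finset.mem_Ioc.2 ⟨hn0, Nat.le_floor hc⟩)
      rw [max_eq_right (by linarith), max_eq_right (by linarith)]
      simp

/-- Increment of the contribution of a zero, bounded through the derivative; used for zeros of
small height. -/
theorem norm_zeroTerm_sub_le (hRH : RiemannHypothesis) (ρ : Zeros riemannZeta₁) {y h : ℝ}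
    (hy : 1 < y) (hh : 0 ≤ h) :
    ‖zeroTerm ρ (y + h) - zeroTerm ρ y‖ ≤
      (mult riemannZeta₁ ρ : ℝ) / ‖(ρ:ℂ)‖ * (h * √(y + h)) := by
  have hρ : 0 < ‖(ρ:ℂ)‖ := by linarith [half_le_norm_zeros hRH ρ]
  have hρ1 : 0 < ‖(ρ:ℂ) + 1‖ := norm_pos_iff.2 (zeros_add_one_ne hRH ρ)
  have key : ‖((y + h : ℝ):ℂ) ^ ((ρ:ℂ) + 1) - (y:ℂ) ^ ((ρ:ℂ) + 1)‖ ≤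
      ‖(ρ:ℂ) + 1‖ * √(y + h) * ‖(y + h) - y‖ := by
    refine Convex.norm_image_sub_le_of_norm_hasDerivWithin_le
      (f := fun t : ℝ => (t:ℂ) ^ ((ρ:ℂ) + 1))
      (f' := fun t : ℝ => ((ρ:ℂ) + 1) * (t:ℂ) ^ (ρ:ℂ)) (s := Icc y (y + h)) ?_ ?_
      (convex_Icc _ _) (left_mem_Icc.2 (by linarith)) (right_mem_Icc.2 (by linarith))
    · intro t ht
      have ht0 : 0 < t := by linarith [ht.1]
      have h1 := (((hasDerivAt_id (t:ℂ)).cpow_const (c := (ρ:ℂ) + 1)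
        (Or.inl (by simpa using ht0))).comp_ofReal).hasDerivWithinAt (s := Icc y (y + h))
      simpa using h1
    · intro t ht
      have ht0 : 0 < t := by linarith [ht.1]
      rw [norm_mul, Complex.norm_cpow_eq_rpow_re_of_pos ht0]
      refine mul_le_mul_of_nonneg_left ?_ (norm_nonneg _)
      calc t ^ (ρ:ℂ).re ≤ t ^ (1/2:ℝ) :=
            Real.rpow_le_rpow_of_exponent_le (by linarith [ht.1]) (zeros_re_le hRH ρ)
        _ = √t := (Real.sqrt_eq_rpow t).symm
        _ ≤ √(y + h) := Real.sqrt_le_sqrt ht.2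
  rw [add_sub_cancel_left, Real.norm_of_nonneg hh] at key
  have e : zeroTerm ρ (y + h) - zeroTerm ρ y = (mult riemannZeta₁ ρ : ℂ) *
      ((((y + h : ℝ):ℂ) ^ ((ρ:ℂ) + 1) - (y:ℂ) ^ ((ρ:ℂ) + 1)) / (ρ * (ρ + 1))) := by
    unfold zeroTerm; ring
  rw [e, norm_mul, norm_div, norm_mul, Complex.norm_natCast]
  calc _ ≤ (mult riemannZeta₁ ρ : ℝ) *
        (‖(ρ:ℂ) + 1‖ * √(y + h) * h / (‖(ρ:ℂ)‖ * ‖(ρ:ℂ) + 1‖)) := by gcongr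
    _ = _ := by field_simp

/-- Increment of the contribution of a zero, bounded trivially; used for zeros of large height. -/
theorem norm_zeroTerm_sub_le' (hRH : RiemannHypothesis) (ρ : Zeros riemannZeta₁) {y h : ℝ}
    (hy : 1 < y) (hh : 0 ≤ h) :
    ‖zeroTerm ρ (y + h) - zeroTerm ρ y‖ ≤
      (mult riemannZeta₁ ρ : ℝ) / ‖(ρ:ℂ)‖ ^ 2 * (4 * ((y + h) * √(y + h))) := by
  have hρ : 0 < ‖(ρ:ℂ)‖ := by linarith [half_le_norm_zeros hRH ρ]
  have b : ∀ t : ℝ, 1 < t → t ≤ y + h → ‖(t:ℂ) ^ ((ρ:ℂ) + 1)‖ ≤ (y + h) * √(y + h) := by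
    intro t ht hty
    have ht0 : 0 < t := by linarith
    rw [Complex.norm_cpow_eq_rpow_re_of_pos ht0]
    calc t ^ ((ρ:ℂ) + 1).re ≤ t ^ (1 + 1/2:ℝ) := by
          apply Real.rpow_le_rpow_of_exponent_le ht.le
          have := zeros_re_le hRH ρ
          simp; linarith
      _ = t * √t := by rw [Real.rpow_add ht0, Real.rpow_one, Real.sqrt_eq_rpow]
      _ ≤ (y + h) * √(y + h) := by gcongr
  have key : ‖((y + h : ℝ):ℂ) ^ ((ρ:ℂ) + 1) - (y:ℂ) ^ ((ρ:ℂ) + 1)‖ ≤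
      2 * ((y + h) * √(y + h)) := by
    refine (norm_sub_le _ _).trans ?_
    linarith [b (y + h) (by linarith) le_rfl, b y hy (by linarith)]
  have e : zeroTerm ρ (y + h) - zeroTerm ρ y = (mult riemannZeta₁ ρ : ℂ) *
      ((((y + h : ℝ):ℂ) ^ ((ρ:ℂ) + 1) - (y:ℂ) ^ ((ρ:ℂ) + 1)) / (ρ * (ρ + 1))) := by
    unfold zeroTerm; ring
  rw [e, norm_mul, norm_div, norm_mul, Complex.norm_natCast]
  have h2 := norm_zeros_add_one hRH ρ
  calc _ ≤ (mult riemannZeta₁ ρ : ℝ) *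
        (2 * ((y + h) * √(y + h)) / (‖(ρ:ℂ)‖ * (‖(ρ:ℂ)‖ / 2))) := by gcongr
    _ = _ := by field_simp; ring

/-- The sum over all zeros, split at height `T`. -/
theorem norm_tsum_zeroTerm_sub_le (hRH : RiemannHypothesis) {y h T S V : ℝ}
    (hy : 1 < y) (hh : 0 ≤ h)
    (hS : ∀ F : Finset (Zeros riemannZeta₁), (∀ ρ ∈ F, ‖(ρ:ℂ)‖ ≤ T) →
      ∑ ρ ∈ F, (mult riemannZeta₁ ρ : ℝ) / ‖(ρ:ℂ)‖ ≤ S)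
    (hV : ∀ F : Finset (Zeros riemannZeta₁), (∀ ρ ∈ F, T < ‖(ρ:ℂ)‖) →
      ∑ ρ ∈ F, (mult riemannZeta₁ ρ : ℝ) / ‖(ρ:ℂ)‖ ^ 2 ≤ V) :
    ‖(∑' ρ, zeroTerm ρ (y + h)) - ∑' ρ, zeroTerm ρ y‖ ≤
      S * (h * √(y + h)) + V * (4 * ((y + h) * √(y + h))) := by
  have s1 := summable_zeroTerm hRH (x := y + h) (by linarith)
  have s2 := summable_zeroTerm hRH hy
  refine le_of_tendsto (s1.hasSum.sub s2.hasSum).norm (Eventually.of_forall fun F => ?_)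
  rw [← Finset.sum_filter_add_sum_filter_not F (fun ρ => ‖(ρ:ℂ)‖ ≤ T)]
  refine (norm_add_le _ _).trans (add_le_add ?_ ?_)
  · refine (norm_sum_le_of_le _ fun ρ _ => norm_zeroTerm_sub_le hRH ρ hy hh).trans ?_
    rw [← Finset.sum_mul]
    refine mul_le_mul_of_nonneg_right (hS _ fun ρ hρ => (Finset.mem_filter.1 hρ).2) ?_
    positivity
  · refine (norm_sum_le_of_le _ fun ρ _ => norm_zeroTerm_sub_le' hRH ρ hy hh).trans ?_
    rw [← Finset.sum_mul]
    refine mul_le_mul_of_nonneg_right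
      (hV _ fun ρ hρ => not_le.1 (Finset.mem_filter.1 hρ).2) ?_
    have : 0 < y + h := by linarith
    positivity

/-- Increment of `psiOne` against its main term `h * y`. -/
theorem abs_psiOne_sub_le (hRH : RiemannHypothesis) {y h T S V : ℝ}
    (hy : 1 < y) (hh : 0 ≤ h)
    (hS : ∀ F : Finset (Zeros riemannZeta₁), (∀ ρ ∈ F, ‖(ρ:ℂ)‖ ≤ T) →
      ∑ ρ ∈ F, (mult riemannZeta₁ ρ : ℝ) / ‖(ρ:ℂ)‖ ≤ S)
    (hV : ∀ F : Finset (Zeros riemannZeta₁), (∀ ρ ∈ F, T < ‖(ρ:ℂ)‖) →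
      ∑ ρ ∈ F, (mult riemannZeta₁ ρ : ℝ) / ‖(ρ:ℂ)‖ ^ 2 ≤ V) :
    |psiOne (y + h) - psiOne y - h * y| ≤ h * (1 + ‖logDeriv riemannZeta₁ 0‖) + h ^ 2 / 2 +
      (S * (h * √(y + h)) + V * (4 * ((y + h) * √(y + h)))) := by
  have e1 := explicit_formula hRH (x := y + h) (by linarith)
  have e2 := explicit_formula hRH hy
  set B := logDeriv riemannZeta₁ 0
  have e : ((psiOne (y + h) - psiOne y - h * y : ℝ) : ℂ) =
      (h:ℂ) * (-1 - B) + ((h ^ 2 / 2 : ℝ) : ℂ) -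
        ((∑' ρ, zeroTerm ρ (y + h)) - ∑' ρ, zeroTerm ρ y) := by
    push_cast at e1 ⊢
    rw [e1, e2]; ring
  have h1 : ‖(h:ℂ) * (-1 - B)‖ ≤ h * (1 + ‖B‖) := by
    rw [norm_mul, Complex.norm_real, Real.norm_of_nonneg hh]
    refine mul_le_mul_of_nonneg_left ((norm_sub_le _ _).trans ?_) hh
    simp
  have h2 : ‖((h ^ 2 / 2 : ℝ) : ℂ)‖ = h ^ 2 / 2 := by
    rw [Complex.norm_real, Real.norm_of_nonneg (by positivity)]
  rw [← Real.norm_eq_abs, ← Complex.norm_real, e]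
  refine (norm_sub_le _ _).trans (add_le_add ((norm_add_le _ _).trans ?_)
    (norm_tsum_zeroTerm_sub_le hRH hy hh hS hV))
  rw [h2]
  linarith

/-- `ψ` is squeezed between difference quotients of `psiOne`. -/
theorem abs_psi_sub_le (hRH : RiemannHypothesis) {x h T S V : ℝ}
    (hx : 1 < x - h) (hh : 0 < h) (hS0 : 0 ≤ S) (hV0 : 0 ≤ V)
    (hS : ∀ F : Finset (Zeros riemannZeta₁), (∀ ρ ∈ F, ‖(ρ:ℂ)‖ ≤ T) →
      ∑ ρ ∈ F, (mult riemannZeta₁ ρ : ℝ) / ‖(ρ:ℂ)‖ ≤ S)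
    (hV : ∀ F : Finset (Zeros riemannZeta₁), (∀ ρ ∈ F, T < ‖(ρ:ℂ)‖) →
      ∑ ρ ∈ F, (mult riemannZeta₁ ρ : ℝ) / ‖(ρ:ℂ)‖ ^ 2 ≤ V) :
    |Chebyshev.psi x - x| ≤ 1 + ‖logDeriv riemannZeta₁ 0‖ + 3 / 2 * h + S * √(x + h) +
      4 * V * ((x + h) * √(x + h)) / h := by
  have hx0 : 0 < x := by linarith
  have u := (abs_le.1 (abs_psiOne_sub_le hRH (y := x) (by linarith) hh.le hS hV)).2
  have l := (abs_le.1 (abs_psiOne_sub_le hRH hx hh.le hS hV)).1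
  rw [sub_add_cancel] at l
  have u' := mul_psi_le (x := x) (by linarith) hh.le
  have l' := le_mul_psi hx hh.le
  have m1 : √x ≤ √(x + h) := Real.sqrt_le_sqrt (by linarith)
  have m2 : S * (h * √x) ≤ S * (h * √(x + h)) := by gcongr
  have m3 : V * (4 * (x * √x)) ≤ V * (4 * ((x + h) * √(x + h))) := by
    have : x * √x ≤ (x + h) * √(x + h) := by gcongr; linarith
    gcongr
  set B := ‖logDeriv riemannZeta₁ 0‖
  have tot : |h * (Chebyshev.psi x - x)| ≤ h * (1 + B + 3 / 2 * h + S * √(x + h) +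
      4 * V * ((x + h) * √(x + h)) / h) := by
    have e : h * (1 + B + 3 / 2 * h + S * √(x + h) + 4 * V * ((x + h) * √(x + h)) / h) =
      h * (1 + B) + 3 / 2 * h ^ 2 + S * (h * √(x + h)) + V * (4 * ((x + h) * √(x + h))) := by
      field_simp
    rw [e, abs_le]
    constructor <;> nlinarith [sq_nonneg h]
  rw [abs_mul, abs_of_pos hh] at tot
  exact le_of_mul_le_mul_left tot hh

theorem chebyshev_theta_eq (x : ℝ) :
    Chebyshev.theta x = ∑ p ∈ (Finset.range (⌊x⌋₊ + 1)).filter Nat.Prime, Real.log p := by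
  rw [Chebyshev.theta]
  refine Finset.sum_congr ?_ fun _ _ => rfl
  ext p
  simp only [Finset.mem_filter, Finset.mem_Ioc, Finset.mem_range, Nat.lt_succ_iff]
  exact ⟨fun h => ⟨h.1.2, h.2⟩, fun h => ⟨⟨h.2.pos, h.1⟩, h.2⟩⟩

theorem eventually_mul_log_cube_le (C : ℝ) : ∀ᶠ x : ℝ in atTop, C * Real.log x ^ 3 ≤ √x := by
  have h := (isLittleO_log_rpow_rpow_atTop 3 (by norm_num : (0:ℝ) < 1/2)).def
    (c := 1 / (1 + |C|)) (by positivity)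
  filter_upwards [h, eventually_ge_atTop 1] with x hx hx1
  have hl := Real.log_nonneg hx1
  rw [show (3:ℝ) = ((3:ℕ):ℝ) by norm_num, Real.rpow_natCast, ← Real.sqrt_eq_rpow,
    Real.norm_of_nonneg (by positivity), Real.norm_of_nonneg (by positivity),
    div_mul_eq_mul_div, one_mul, le_div_iff₀ (by positivity)] at hx
  have : C * Real.log x ^ 3 ≤ (1 + |C|) * Real.log x ^ 3 := by
    gcongr; linarith [le_abs_self C]
  linarith

/-- The choice `h = √x * log x` in `abs_psi_sub_le`, with `r = √x`, `L = log x`, `T = c * r` and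
`V` bounded by `D * L / T`. -/
theorem abs_psi_sub_le_of_bounds (hRH : RiemannHypothesis) {x r L c D S V : ℝ}
    (hr3 : 3 ≤ r) (hxr : x = r * r) (hL2 : 2 ≤ L) (hLr : 4 * L ≤ r) (hc0 : 0 < c)
    (hrB : 1 + ‖logDeriv riemannZeta₁ 0‖ ≤ r) (hS0 : 0 ≤ S) (hV0 : 0 ≤ V) (hSL : S * L ≤ r)
    (h2 : V ≤ D * L / (c * r))
    (hS : ∀ F : Finset (Zeros riemannZeta₁), (∀ ρ ∈ F, ‖(ρ:ℂ)‖ ≤ c * r) →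
      ∑ ρ ∈ F, (mult riemannZeta₁ ρ : ℝ) / ‖(ρ:ℂ)‖ ≤ S)
    (hV : ∀ F : Finset (Zeros riemannZeta₁), (∀ ρ ∈ F, c * r < ‖(ρ:ℂ)‖) →
      ∑ ρ ∈ F, (mult riemannZeta₁ ρ : ℝ) / ‖(ρ:ℂ)‖ ^ 2 ≤ V) :
    |Chebyshev.psi x - x| ≤ r * (1 + 3 / 2 * L + (S + 1) + 12 * D / c) := by
  have hr0 : 0 < r := by linarith
  have hL0 : 0 < L := by linarith
  have hx0 : 0 < x := by rw [hxr]; positivity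
  set h := r * L with hh
  have hh0 : 0 < h := by positivity
  have hh4 : 4 * h ≤ x := by rw [hh, hxr]; nlinarith
  have hsq : √(x + h) ≤ r + L := by
    apply Real.sqrt_le_iff.2
    refine ⟨by positivity, ?_⟩
    rw [hh, hxr]; nlinarith
  have main := abs_psi_sub_le hRH (x := x) (h := h) (by nlinarith) hh0 hS0 hV0 hS hV
  have hA : S * √(x + h) ≤ r * (S + 1) := by
    calc S * √(x + h) ≤ S * (r + L) := by gcongr
      _ = r * S + S * L := by ring
      _ ≤ r * (S + 1) := by linarith
  have hE : 4 * V * ((x + h) * √(x + h)) / h ≤ r * (12 * D / c) := by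
    have h1 : (x + h) * √(x + h) ≤ 3 * (x * r) := by
      calc (x + h) * √(x + h) ≤ (5 / 4 * x) * (5 / 4 * r) := by
            gcongr <;> linarith
        _ ≤ _ := by nlinarith [mul_pos hx0 hr0]
    calc 4 * V * ((x + h) * √(x + h)) / h ≤ 4 * (D * L / (c * r)) * (3 * (x * r)) / h := by
          gcongr
          linarith
      _ = r * (12 * D / c) := by
        rw [hh, hxr]; field_simp; ring
  have e2 : 3 / 2 * h = r * (3 / 2 * L) := by rw [hh]; ring
  have e3 : r * (1 + 3 / 2 * L + (S + 1) + 12 * D / c) =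
    r + r * (3 / 2 * L) + r * (S + 1) + r * (12 * D / c) := by ring
  rw [e3]
  linarith

/-- The sum over the zeros up to height `T` is at most `√x / log x`. -/
theorem mul_le_of_sum_bound {S L r C₁ : ℝ} (hL2 : 2 ≤ L)
    (hSle : S ≤ 1 / (8 * Real.pi) * L ^ 2 - 10 * L + C₁) (hr4 : (1 + |C₁|) * L ^ 3 ≤ r) :
    S * L ≤ r := by
  have hpi8 : 1 / (8 * Real.pi) ≤ 1 := by
    rw [div_le_one (by positivity)]; linarith [Real.pi_gt_three]
  have h1 : S ≤ (1 + |C₁|) * L ^ 2 := by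
    have h0 := le_abs_self C₁
    have h2 : |C₁| * 1 ≤ |C₁| * L ^ 2 :=
      mul_le_mul_of_nonneg_left (by nlinarith) (abs_nonneg _)
    have h3 : 1 / (8 * Real.pi) * L ^ 2 ≤ 1 * L ^ 2 :=
      mul_le_mul_of_nonneg_right hpi8 (sq_nonneg _)
    linarith
  calc S * L ≤ (1 + |C₁|) * L ^ 2 * L := mul_le_mul_of_nonneg_right h1 (by linarith)
    _ = (1 + |C₁|) * L ^ 3 := by ring
    _ ≤ r := hr4

/-- The estimate for `θ`, with `T` a small multiple of `√x`. -/
theorem eventually_theta_lt (hRH : RiemannHypothesis) : ∀ᶠ x : ℝ in atTop,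
    |Chebyshev.theta x - x| < (1 / (8 * Real.pi)) * √x * Real.log x ^ 2 := by
  obtain ⟨b, d, hS⟩ := exists_sum_inv_le hRH
  obtain ⟨D, hD, hV⟩ := exists_sum_inv_sq_le
  set B := ‖logDeriv riemannZeta₁ 0‖ with hB
  have hπ := Real.pi_pos
  -- Lowering the cut-off from `√x` to `√x * exp (-K)` gains a multiple of `√x * log x`.
  set K : ℝ := 2 * Real.pi * (|b| / 2 + 10) with hK
  have hK0 : 0 ≤ K := by positivity
  set c : ℝ := Real.exp (-K) with hc
  have hc0 : 0 < c := Real.exp_pos _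
  set C₁ : ℝ := 1 / (2 * Real.pi) * K ^ 2 - b * K + d with hC₁
  have tl := Real.tendsto_log_atTop
  have ts := Real.tendsto_sqrt_atTop
  filter_upwards [tl.eventually_ge_atTop 2, tl.eventually_ge_atTop (C₁ + 12 * D / c + 3),
    tl.eventually_ge_atTop (2 * K), ts.eventually_ge_atTop (1 + B), ts.eventually_ge_atTop (1 / c),
    ts.eventually_ge_atTop 3,
    eventually_mul_log_cube_le (1 + |C₁|), eventually_mul_log_cube_le 1, eventually_ge_atTop 1]
    with x hL2 hL1 hLK hrB hrc hr3 hr4 hr5 hx1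
  set L := Real.log x with hL
  set r := √x with hr
  have hx0 : 0 < x := by linarith
  have hr0 : 0 < r := Real.sqrt_pos.2 hx0
  have hxr : x = r * r := (Real.mul_self_sqrt hx0.le).symm
  have hlogr : Real.log r = L / 2 := by rw [hr, Real.log_sqrt hx0.le]
  set T := c * r with hT
  have hT1 : 1 ≤ T := by
    rw [hT, mul_comm]; exact (div_le_iff₀ hc0).1 hrc
  have hlogT : Real.log T = L / 2 - K := by
    rw [hT, Real.log_mul hc0.ne' hr0.ne', hlogr, hc, Real.log_exp]; ring
  set S : ℝ := 1 / (2 * Real.pi) * Real.log T ^ 2 + b * Real.log T + d with hSdef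
  set V : ℝ := D * (1 + Real.log T) / T with hVdef
  have hS' := fun F => hS F T hT1
  have hV' := fun F => hV F T hT1
  have hS0 : 0 ≤ S := le_trans (le_of_eq Finset.sum_empty.symm) (hS' ∅ (by simp))
  have hV0 : 0 ≤ V := le_trans (le_of_eq Finset.sum_empty.symm) (hV' ∅ (by simp))
  have hSle : S ≤ 1 / (8 * Real.pi) * L ^ 2 - 10 * L + C₁ := by
    have e : S = 1 / (8 * Real.pi) * L ^ 2 - (|b| / 2 + 10 - b / 2) * L + C₁ := by
      have : K / (2 * Real.pi) = |b| / 2 + 10 := by rw [hK]; field_simp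
      rw [← this, hSdef, hlogT, hC₁]; field_simp; ring
    rw [e]
    nlinarith [le_abs_self b]
  have hSL : S * L ≤ r := mul_le_of_sum_bound hL2 hSle hr4
  have hLr : 4 * L ≤ r := by nlinarith [mul_le_mul hL2 hL2 (by norm_num) (by linarith)]
  have h2 : V ≤ D * L / T := by
    rw [hVdef, hlogT]
    refine div_le_div_of_nonneg_right (mul_le_mul_of_nonneg_left ?_ hD) (by linarith)
    linarith
  have main := abs_psi_sub_le_of_bounds hRH hr3 hxr hL2 hLr hc0 hrB hS0 hV0 hSL h2 hS' hV'
  have hθ := Chebyshev.abs_psi_sub_theta_le_sqrt_mul_log hx1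
  have tri : |Chebyshev.theta x - x| ≤
      |Chebyshev.psi x - Chebyshev.theta x| + |Chebyshev.psi x - x| := by
    rw [abs_sub_comm (Chebyshev.psi x) (Chebyshev.theta x)]
    exact abs_sub_le _ _ _
  have tot : |Chebyshev.theta x - x| ≤
      r * (2 * L + 1 + 3 / 2 * L + (S + 1) + 12 * D / c) := by
    have e3 : r * (2 * L + 1 + 3 / 2 * L + (S + 1) + 12 * D / c) =
      2 * r * L + r * (1 + 3 / 2 * L + (S + 1) + 12 * D / c) := by ring
    rw [e3]
    linarith
  refine tot.trans_lt ?_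
  calc r * (2 * L + 1 + 3 / 2 * L + (S + 1) + 12 * D / c)
      < r * (1 / (8 * Real.pi) * L ^ 2) := by
        refine mul_lt_mul_of_pos_left ?_ hr0
        linarith
    _ = _ := by ring

end RHTheta

/-- **Theorem 5(iii) (Rosser–Schoenfeld).** If the Riemann Hypothesis holds, then
`|ϑ(x) − x| < (8π)⁻¹ √x (log x)²` for all sufficiently large `x`. -/
theorem chebyshevTheta_error_of_riemannHypothesis (hRH : RiemannHypothesis) :
    ∃ x₀ : ℝ, ∀ x : ℝ, x₀ ≤ x →
      |chebyshevTheta x - x| <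
        (1 / (8 * Real.pi)) * Real.sqrt x * Real.log x ^ 2 := by
  obtain ⟨x₀, h⟩ := Filter.eventually_atTop.1 (RHTheta.eventually_theta_lt hRH)
  refine ⟨x₀, fun x hx => ?_⟩
  rw [chebyshevTheta, ← RHTheta.chebyshev_theta_eq]
  exact h x hx
end

section
/- For every pair of coprime positive integers a and q, there exists a constant B_{a,q} and a constant C > 0 such that for all real x ≥ 3, |∑_{p ≤ x, p prime, p ≡ a (mod q)} 1/p − (1/φ(q)) · log(log x) − B_{a,q}| ≤ C / log x. -/
/-!
The proof is the classical one of Mertens and Dirichlet, carried out with finite sums only.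

For a nontrivial character `χ` mod `q` the partial sums of `χ` are bounded, so summation by parts
(`norm_sum_Ico_smul_le`) shows that `∑_{n < N} χ(n)/n` is within `O(1/N)` of `L(1, χ)` and that
`∑_{n < N} χ(n) log n / n` is bounded. Writing `log = Λ * 1`, the latter sum is
`∑_{d ≤ N} χ(d) Λ(d)/d · ∑_{m ≤ N/d} χ(m)/m = L(1, χ) ∑_{d ≤ N} χ(d) Λ(d)/d + O(ψ(N)/N)`.
Chebyshev's bound `ψ(N) = O(N)` and `L(1, χ) ≠ 0` then give `∑_{d ≤ N} χ(d) Λ(d)/d = O(1)`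
(`exists_norm_sum_vonMangoldt_le`). For the trivial character the sum is `log N + O(1)`, by
`log N! = ∑ Λ(d) ⌊N/d⌋`. Orthogonality of characters, and the convergence of `∑ Λ(n)/n` over
non-primes, yield `∑_{p ≤ N, p ≡ a (q)} log p / p = (log N)/φ(q) + O(1)`
(`exists_abs_sum_prime_log_div_sub_log_le`).

To remove the weight `log p`, put `e(n) = w(n) - (log n - log (n - 1))/φ(q)`, where `w(n)` is
`log n / n` at the primes in the progression and `0` elsewhere. The partial sums of `e` are
bounded, so the tails of `∑ e(n)/log n` are `O(1/log N)`; and `(log n - log (n - 1))/log n` differs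
from `log log n - log log (n - 1)` by at most `1/log (n - 1) - 1/log n`, which telescopes.
Hence `∑ 1/p - (log log N)/φ(q)` is a Cauchy sequence with rate `O(1/log N)`, and its limit is the
constant `B`.
-/

open Finset Filter Topology ArithmeticFunction

/-! ### Nontrivial characters -/

/-- Dirichlet's test with an explicit tail bound: if the partial sums of `a` are bounded by `M` and
`f` is nonnegative and antitone from `N` on, then sums of `f i • a i` starting at `N` are bounded by
`2 * M * f N`. -/
theorem norm_sum_Ico_smul_le {E : Type*} [NormedAddCommGroup E] [NormedSpace ℝ E]
    (a : ℕ → E) (f : ℕ → ℝ) {M : ℝ} (hM : ∀ n, ‖∑ i ∈ range n, a i‖ ≤ M)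
    {N : ℕ} (hf : ∀ n, N ≤ n → f (n + 1) ≤ f n) (hf0 : ∀ n, N ≤ n → 0 ≤ f n)
    {K : ℕ} (hK : N ≤ K) :
    ‖∑ i ∈ Ico N K, f i • a i‖ ≤ 2 * M * f N := by
  set A : ℕ → E := fun n => ∑ i ∈ range n, a i - ∑ i ∈ range N, a i with hA
  have hA2 (n : ℕ) : ‖A n‖ ≤ 2 * M := by
    have := norm_sub_le (∑ i ∈ range n, a i) (∑ i ∈ range N, a i)
    linarith [hM n, hM N]
  -- Subtracting the boundary term of the summation by parts makes the induction on `K` go through.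
  have key : ‖∑ i ∈ Ico N K, f i • a i - f K • A K‖ ≤ 2 * M * (f N - f K) := by
    induction K, hK using Nat.le_induction with
    | base => simp [hA]
    | succ K hK ih =>
      have h1 : ∑ i ∈ Ico N (K + 1), f i • a i - f (K + 1) • A (K + 1)
          = (∑ i ∈ Ico N K, f i • a i - f K • A K) + (f K - f (K + 1)) • A (K + 1) := by
        have h2 : a K = A (K + 1) - A K := by simp [hA, sum_range_succ]
        rw [sum_Ico_succ_top hK, h2]
        module
      rw [h1]
      refine (norm_add_le _ _).trans ?_
      have h3 : ‖(f K - f (K + 1)) • A (K + 1)‖ ≤ (f K - f (K + 1)) * (2 * M) := by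
        rw [norm_smul, Real.norm_of_nonneg (sub_nonneg.2 (hf K hK))]
        exact mul_le_mul_of_nonneg_left (hA2 _) (sub_nonneg.2 (hf K hK))
      linarith
  have h4 : ‖f K • A K‖ ≤ f K * (2 * M) := by
    rw [norm_smul, Real.norm_of_nonneg (hf0 K hK)]
    exact mul_le_mul_of_nonneg_left (hA2 _) (hf0 K hK)
  have h5 := norm_add_le (∑ i ∈ Ico N K, f i • a i - f K • A K) (f K • A K)
  rw [sub_add_cancel] at h5
  linarith

theorem sum_Ioc_eq_sum_range {E : Type*} [AddCommMonoid E] (f : ℕ → E) (hf : f 0 = 0) (N : ℕ) :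
    ∑ n ∈ Ioc 0 N, f n = ∑ n ∈ range (N + 1), f n := by
  symm
  rw [sum_range_succ', hf, add_zero, ← Ico_add_one_add_one_eq_Ioc, sum_Ico_eq_sum_range]
  simp [add_comm]

/-- The sum over a full period vanishes, so only an incomplete period contributes. -/
theorem norm_sum_range_dirichletCharacter_le {q : ℕ} [NeZero q] {χ : DirichletCharacter ℂ q}
    (hχ : χ ≠ 1) (n : ℕ) : ‖∑ i ∈ range n, χ i‖ ≤ q := by
  induction n using Nat.strong_induction_on with
  | _ n ih =>
    rcases lt_or_ge n q with h | h
    · calc ‖∑ i ∈ range n, χ i‖ ≤ ∑ i ∈ range n, (1 : ℝ) :=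
            norm_sum_le_of_le _ fun i _ => χ.norm_le_one _
        _ ≤ q := by simpa using h.le
    · obtain ⟨m, rfl⟩ := Nat.exists_eq_add_of_le h
      have hper : ∑ i ∈ range q, χ i = 0 := by
        rw [← MulChar.sum_eq_zero_of_ne_one hχ]
        refine sum_nbij' (fun i => (i : ZMod q)) (fun x => x.val) ?_ ?_ ?_ ?_ ?_
        · simp
        · intro x _
          simpa using ZMod.val_lt x
        · intro i hi
          exact ZMod.val_cast_of_lt (mem_range.1 hi)
        · simp
        · simp
      rw [sum_range_add, hper, zero_add]
      simpa using ih m (by have := NeZero.pos q; omega)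

/-- The series `∑ χ(n)/n` converges (conditionally) to `L(1, χ)` with error `O(1/N)`. The
tail bound for `∑ χ(n) n⁻ˢ` is uniform in `s > 1`, which allows letting `s` tend to `1` from the
right, where the analytically continued `L`-function is continuous. -/
theorem norm_sum_range_div_sub_LFunction_le {q : ℕ} [NeZero q] {χ : DirichletCharacter ℂ q}
    (hχ : χ ≠ 1) {N : ℕ} (hN : 0 < N) :
    ‖∑ n ∈ range N, χ n / n - χ.LFunction 1‖ ≤ 2 * q / N := by
  have hN' : (0 : ℝ) < N := by exact_mod_cast hN
  have hs (s : ℝ) (hs : 1 < s) :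
      ‖∑ n ∈ range N, LSeries.term (fun n => χ n) s n - χ.LFunction s‖
        ≤ 2 * q * (N : ℝ) ^ (-s) := by
    have hs' : 1 < (s : ℂ).re := by simpa using hs
    rw [χ.LFunction_eq_LSeries hs', norm_sub_rev]
    have hsum := (χ.LSeriesSummable_of_one_lt_re hs').hasSum.tendsto_sum_nat
    refine le_of_tendsto (hsum.sub_const _).norm ?_
    filter_upwards [eventually_ge_atTop N] with K hK
    rw [← sum_Ico_eq_sub _ hK]
    have := norm_sum_Ico_smul_le (fun n => χ (n : ZMod q)) (fun n => (n : ℝ) ^ (-s))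
      (norm_sum_range_dirichletCharacter_le hχ) (N := N) ?_ ?_ hK
    · refine le_trans (le_of_eq ?_) this
      congr 1
      refine sum_congr rfl fun n hn => ?_
      have hn0 : n ≠ 0 := by have := (mem_Ico.1 hn).1; omega
      rw [LSeries.term_of_ne_zero hn0, Complex.real_smul, Complex.ofReal_cpow (by positivity)]
      push_cast
      rw [Complex.cpow_neg]
      field_simp
    · intro n hn
      have hn0 : (0 : ℝ) < n := by exact_mod_cast (by omega : 0 < n)
      exact Real.rpow_le_rpow_of_nonpos hn0 (by simp) (by linarith)
    · intro n hn
      positivity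
  have hcont : Continuous fun s : ℝ => ‖∑ n ∈ range N, LSeries.term (fun n => χ n) s n
      - χ.LFunction s‖ := by
    refine (Continuous.sub ?_ ?_).norm
    · refine continuous_finsetSum _ fun n _ => ?_
      exact (continuous_iff_continuousAt.2 fun s =>
        (LSeries.hasDerivAt_term (fun n => χ n) n s).continuousAt).comp Complex.continuous_ofReal
    · exact (DirichletCharacter.differentiable_LFunction hχ).continuous.comp
        Complex.continuous_ofReal
  have hcont2 : Continuous fun s : ℝ => 2 * (q : ℝ) * (N : ℝ) ^ (-s) := by
    have := Real.continuous_const_rpow hN'.ne'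
    exact continuous_const.mul (this.comp continuous_neg)
  have h1 := le_of_tendsto_of_tendsto
    (hcont.tendsto 1 |>.mono_left (nhdsWithin_le_nhds (s := Set.Ioi 1)))
    (hcont2.tendsto 1 |>.mono_left (nhdsWithin_le_nhds (s := Set.Ioi 1)))
    (eventually_nhdsWithin_of_forall fun s hs' => hs s hs')
  simp only [Complex.ofReal_one, Real.rpow_neg_one, ← div_eq_mul_inv] at h1
  have h2 (n : ℕ) : LSeries.term (fun n => χ n) 1 n = χ n / n := by
    rw [LSeries.term_def]
    split_ifs with h <;> simp [h]
  simpa only [h2] using h1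

/-- Summation by parts starts at `3` because `log x / x` decreases only for `x ≥ e`. -/
theorem exists_norm_sum_log_div_le {q : ℕ} [NeZero q] {χ : DirichletCharacter ℂ q}
    (hχ : χ ≠ 1) : ∃ C : ℝ, ∀ N : ℕ, ‖∑ n ∈ range N, χ n * Real.log n / n‖ ≤ C := by
  set g : ℕ → ℂ := fun n => χ n * Real.log n / n with hg
  refine ⟨∑ n ∈ range 3, ‖g n‖ + 2 * q * (Real.log 3 / 3), fun N => ?_⟩
  have h0 : 0 ≤ 2 * (q : ℝ) * (Real.log 3 / 3) := by positivity
  rcases le_total N 3 with h | h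
  · have : ∑ n ∈ range N, ‖g n‖ ≤ ∑ n ∈ range 3, ‖g n‖ :=
      sum_le_sum_of_subset_of_nonneg (range_mono h) fun _ _ _ => norm_nonneg _
    linarith [norm_sum_le (range N) g]
  · have hI : ‖∑ n ∈ Ico 3 N, g n‖ ≤ 2 * q * (Real.log 3 / 3) := by
      have := norm_sum_Ico_smul_le (fun n => χ (n : ZMod q)) (fun n => Real.log n / n)
        (norm_sum_range_dirichletCharacter_le hχ) (N := 3) ?_ ?_ h
      · refine le_trans (le_of_eq ?_) this
        congr 1
        refine sum_congr rfl fun n hn => ?_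
        rw [Complex.real_smul, hg]
        push_cast
        ring
      · intro n hn
        have h3 : (3 : ℝ) ≤ n := by exact_mod_cast hn
        have he := Real.exp_one_lt_d9
        exact Real.log_div_self_antitoneOn (by simp only [Set.mem_Ici]; linarith)
          (by simp only [Set.mem_Ici]; push_cast; linarith) (by simp)
      · intro n _
        positivity
    rw [← sum_range_add_sum_Ico _ h]
    exact (norm_add_le _ _).trans (add_le_add (norm_sum_le _ _) hI)

/-- This is where the nonvanishing of `L(1, χ)` is used: the sum times `L(1, χ)` is bounded. -/
theorem exists_norm_sum_vonMangoldt_le {q : ℕ} [NeZero q] {χ : DirichletCharacter ℂ q}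
    (hχ : χ ≠ 1) : ∃ C : ℝ, ∀ N : ℕ, ‖∑ n ∈ Ioc 0 N, χ n * (Λ n : ℂ) / n‖ ≤ C := by
  obtain ⟨C₁, hC₁⟩ := exists_norm_sum_log_div_le hχ
  set L := χ.LFunction 1 with hL
  have hL0 : L ≠ 0 := DirichletCharacter.LFunction_apply_one_ne_zero hχ
  let f : ArithmeticFunction ℂ := ⟨fun n => χ n * (Λ n : ℂ) / n, by simp⟩
  let g : ArithmeticFunction ℂ := ⟨fun n => χ n / n, by simp⟩
  have hfg (n : ℕ) : (f * g) n = χ n * Real.log n / n := by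
    rw [ArithmeticFunction.mul_apply, ← vonMangoldt_sum,
      ← Nat.sum_divisorsAntidiagonal (fun d _ => Λ d), Complex.ofReal_sum, mul_sum, sum_div]
    refine sum_congr rfl fun x hx => ?_
    rw [← (Nat.mem_divisorsAntidiagonal.1 hx).1]
    change χ x.1 * (Λ x.1 : ℂ) / x.1 * (χ x.2 / x.2) = _
    push_cast
    rw [map_mul]
    ring
  refine ⟨(C₁ + 2 * q * (Real.log 4 + 4)) / ‖L‖, fun N => ?_⟩
  rw [le_div_iff₀ (norm_pos_iff.2 hL0), ← norm_mul]
  change ‖(∑ n ∈ Ioc 0 N, f n) * L‖ ≤ _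
  rcases Nat.eq_zero_or_pos N with rfl | hN
  · simp only [Ioc_self, sum_empty, zero_mul, norm_zero]
    have := (norm_nonneg _).trans (hC₁ 0)
    positivity
  have hN' : (0 : ℝ) < N := by exact_mod_cast hN
  have h1 : ‖∑ n ∈ Ioc 0 N, f n * ∑ m ∈ Ioc 0 (N / n), g m‖ ≤ C₁ := by
    rw [← sum_Ioc_mul_eq_sum_sum, sum_Ioc_eq_sum_range _ (by simp)]
    simpa only [hfg] using hC₁ (N + 1)
  have h2 : ‖∑ n ∈ Ioc 0 N, f n * ∑ m ∈ Ioc 0 (N / n), g m - (∑ n ∈ Ioc 0 N, f n) * L‖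
      ≤ 2 * q * (Real.log 4 + 4) := by
    rw [sum_mul, ← sum_sub_distrib]
    have h3 : ∀ n ∈ Ioc 0 N, ‖f n * ∑ m ∈ Ioc 0 (N / n), g m - f n * L‖ ≤ 2 * q / N * Λ n := by
      intro n hn
      have hn0 : (0 : ℝ) < n := by exact_mod_cast (mem_Ioc.1 hn).1
      have h4 : ‖∑ m ∈ Ioc 0 (N / n), g m - L‖ ≤ 2 * q / N * n := by
        rw [sum_Ioc_eq_sum_range _ (by simp)]
        refine (norm_sum_range_div_sub_LFunction_le hχ (Nat.succ_pos _)).trans ?_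
        have h5 : (N : ℝ) ≤ n * ((N / n : ℕ) + 1 : ℝ) := by
          exact_mod_cast (Nat.lt_mul_div_succ N (mem_Ioc.1 hn).1).le
        push_cast
        rw [div_mul_eq_mul_div, div_le_div_iff₀ (by positivity) hN', mul_assoc _ (n : ℝ)]
        gcongr
      have h6 : ‖f n‖ ≤ Λ n / n := by
        change ‖χ n * (Λ n : ℂ) / n‖ ≤ _
        rw [norm_div, norm_mul, Complex.norm_real, Complex.norm_natCast,
          Real.norm_of_nonneg vonMangoldt_nonneg]
        gcongr
        exact mul_le_of_le_one_left vonMangoldt_nonneg (χ.norm_le_one _)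
      rw [← mul_sub, norm_mul]
      calc _ ≤ Λ n / n * (2 * q / N * n) := by gcongr
        _ = _ := by field_simp
    refine (norm_sum_le_of_le _ h3).trans ?_
    rw [← mul_sum]
    have h7 : ∑ n ∈ Ioc 0 N, Λ n ≤ (Real.log 4 + 4) * N := by
      simpa [Chebyshev.psi] using Chebyshev.psi_le_const_mul_self (x := N) hN'.le
    calc _ ≤ 2 * q / N * ((Real.log 4 + 4) * N) := by gcongr
      _ = _ := by field_simp
  have h8 := norm_sub_norm_le ((∑ n ∈ Ioc 0 N, f n) * L)
    (∑ n ∈ Ioc 0 N, f n * ∑ m ∈ Ioc 0 (N / n), g m)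
  rw [norm_sub_rev] at h8
  linarith

/-! ### The trivial character -/

/-- Mertens' first theorem for `Λ`, obtained by comparing
`log N! = ∑ Λ(n) ⌊N/n⌋` with `N ∑ Λ(n)/n`. -/
theorem exists_abs_sum_vonMangoldt_div_sub_log_le :
    ∃ C : ℝ, ∀ N : ℕ, 0 < N → |∑ n ∈ Ioc 0 N, Λ n / n - Real.log N| ≤ C := by
  refine ⟨Real.log 4 + 4 + 1, fun N hN => ?_⟩
  have hN' : (1 : ℝ) ≤ N := by exact_mod_cast hN
  have hfac : Real.log N.factorial = ∑ n ∈ Ioc 0 N, Λ n * (N / n : ℕ) := by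
    rw [← sum_Ioc_mul_zeta_eq_sum, vonMangoldt_mul_zeta]
    simp only [log_apply]
    clear hN hN'
    induction N with
    | zero => simp
    | succ N ih =>
      rw [Nat.factorial_succ, ← insert_Ioc_right_eq_Ioc_add_one (Nat.zero_le _),
        sum_insert (by simp), ← ih]
      push_cast
      rw [Real.log_mul (by positivity) (by positivity)]
  have hup : Real.log N.factorial ≤ N * Real.log N := by
    rw [← Real.log_pow]
    exact Real.log_le_log (by positivity) (by exact_mod_cast Nat.factorial_le_pow N)
  have hlow : N * Real.log N - N ≤ Real.log N.factorial := by
    have h1 := Stirling.le_log_factorial_stirling hN.ne'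
    have h2 := Real.log_nonneg hN'
    have h3 : 0 ≤ Real.log (2 * Real.pi) := Real.log_nonneg (by linarith [Real.pi_gt_three])
    linarith
  have hpsi : ∑ n ∈ Ioc 0 N, Λ n ≤ (Real.log 4 + 4) * N := by
    simpa [Chebyshev.psi] using Chebyshev.psi_le_const_mul_self (x := N) (by linarith)
  have h4 : N * ∑ n ∈ Ioc 0 N, Λ n / n - Real.log N.factorial ≤ ∑ n ∈ Ioc 0 N, Λ n := by
    rw [hfac, mul_sum, ← sum_sub_distrib]
    refine sum_le_sum fun n hn => ?_
    have h5 := (Nat.lt_floor_add_one ((N : ℝ) / n)).le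
    rw [Nat.floor_div_eq_div] at h5
    have h6 := mul_le_mul_of_nonneg_left h5 (vonMangoldt_nonneg (n := n))
    have h7 : (N : ℝ) * (Λ n / n) = Λ n * (N / n) := by ring
    linarith
  have h8 : Real.log N.factorial ≤ N * ∑ n ∈ Ioc 0 N, Λ n / n := by
    rw [hfac, mul_sum]
    refine sum_le_sum fun n hn => ?_
    have h7 : (N : ℝ) * (Λ n / n) = Λ n * (N / n) := by ring
    rw [h7]
    exact mul_le_mul_of_nonneg_left Nat.cast_div_le vonMangoldt_nonneg
  have h9 : 0 ≤ Real.log 4 := by positivity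
  rw [abs_le]
  constructor <;> refine le_of_mul_le_mul_left ?_ (by linarith : (0 : ℝ) < N) <;> nlinarith

theorem exists_norm_sum_one_vonMangoldt_sub_log_le (q : ℕ) [NeZero q] : ∃ C : ℝ, ∀ N : ℕ, 0 < N →
    ‖∑ n ∈ Ioc 0 N, (1 : DirichletCharacter ℂ q) n * (Λ n : ℂ) / n - Real.log N‖ ≤ C := by
  obtain ⟨C, hC⟩ := exists_abs_sum_vonMangoldt_div_sub_log_le
  set u : ℕ → ℝ := fun n => (if n.Prime then 0 else Λ n) / n with hu
  have hu0 (n : ℕ) : 0 ≤ u n := by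
    simp only [hu]; split_ifs <;> first | simp | positivity [vonMangoldt_nonneg (n := n)]
  have hsu : Summable u := by
    convert! vonMangoldt.summable_residueClass_non_primes_div (0 : ZMod 1) using 4 with n
    simp [vonMangoldt.residueClass, Subsingleton.elim (n : ZMod 1) 0]
  -- If `n` is not coprime to `q`, then `n` is either not prime or a prime divisor of `q`.
  have hpt (n : ℕ) :
      ‖(1 : DirichletCharacter ℂ q) n * (Λ n : ℂ) / n - ((Λ n / n : ℝ) : ℂ)‖
        ≤ u n + (if n ∈ q.divisors then Λ n / n else 0) := by
    have hL : 0 ≤ Λ n / n := div_nonneg vonMangoldt_nonneg (Nat.cast_nonneg _)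
    have hi : 0 ≤ (if n ∈ q.divisors then Λ n / n else 0) := by split_ifs <;> simp [hL]
    by_cases h : n.Coprime q
    · rw [MulChar.one_apply ((ZMod.isUnit_iff_coprime _ _).2 h)]
      simpa using add_nonneg (hu0 n) hi
    · rw [MulChar.map_nonunit _ (mt (ZMod.isUnit_iff_coprime _ _).1 h)]
      rw [zero_mul, zero_div, zero_sub, norm_neg, Complex.norm_real, Real.norm_of_nonneg hL]
      by_cases hp : n.Prime
      · have : n ∈ q.divisors := by
          rw [Nat.mem_divisors]
          exact ⟨by simpa using (Nat.Prime.coprime_iff_not_dvd hp).not.1 h, NeZero.ne q⟩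
        simpa [this] using hu0 n
      · have : u n = Λ n / n := by simp [hu, hp]
        linarith
  refine ⟨∑' n, u n + ∑ n ∈ q.divisors, Λ n / n + C, fun N hN => ?_⟩
  have h1 : ‖∑ n ∈ Ioc 0 N, (1 : DirichletCharacter ℂ q) n * (Λ n : ℂ) / n
      - ((∑ n ∈ Ioc 0 N, Λ n / n : ℝ) : ℂ)‖ ≤ ∑' n, u n + ∑ n ∈ q.divisors, Λ n / n := by
    rw [Complex.ofReal_sum, ← sum_sub_distrib]
    refine (norm_sum_le_of_le _ fun n _ => hpt n).trans ?_
    rw [sum_add_distrib]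
    refine add_le_add (hsu.sum_le_tsum _ fun n _ => hu0 n) ?_
    rw [← sum_filter]
    refine sum_le_sum_of_subset_of_nonneg (fun n hn => (mem_filter.1 hn).2) fun n _ _ => ?_
    exact div_nonneg vonMangoldt_nonneg (Nat.cast_nonneg _)
  have h2 : ‖((∑ n ∈ Ioc 0 N, Λ n / n : ℝ) : ℂ) - Real.log N‖ ≤ C := by
    rw [← Complex.ofReal_sub, Complex.norm_real]
    exact hC N hN
  refine (norm_sub_le_norm_sub_add_norm_sub _ ((∑ n ∈ Ioc 0 N, Λ n / n : ℝ) : ℂ) _).trans ?_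
  exact add_le_add h1 h2

/-! ### Primes in the progression weighted by `log p / p` -/

/-- The estimates for all characters combined by orthogonality; only the trivial character
contributes to the main term. -/
theorem exists_abs_sum_residueClass_div_sub_log_le {q : ℕ} [NeZero q] {a : ZMod q}
    (ha : IsUnit a) : ∃ C : ℝ, ∀ N : ℕ, 0 < N →
    |∑ n ∈ Ioc 0 N, vonMangoldt.residueClass a n / n - 1 / (q.totient : ℝ) * Real.log N| ≤ C := by
  classical
  have h (χ : DirichletCharacter ℂ q) : ∃ C : ℝ, ∀ N : ℕ, 0 < N →
      ‖∑ n ∈ Ioc 0 N, χ n * (Λ n : ℂ) / n - (if χ = 1 then (Real.log N : ℂ) else 0)‖ ≤ C := by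
    by_cases hχ : χ = 1
    · subst hχ
      simpa using exists_norm_sum_one_vonMangoldt_sub_log_le q
    · obtain ⟨C, hC⟩ := exists_norm_sum_vonMangoldt_le hχ
      exact ⟨C, fun N _ => by simpa [hχ] using hC N⟩
  choose C hC using h
  refine ⟨‖(q.totient : ℂ)⁻¹‖ * ∑ χ, C χ, fun N hN => ?_⟩
  have hsum : ((∑ n ∈ Ioc 0 N, vonMangoldt.residueClass a n / n
      - 1 / (q.totient : ℝ) * Real.log N : ℝ) : ℂ)
      = (q.totient : ℂ)⁻¹ * ∑ χ : DirichletCharacter ℂ q, χ a⁻¹ *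
        (∑ n ∈ Ioc 0 N, χ n * (Λ n : ℂ) / n - (if χ = 1 then (Real.log N : ℂ) else 0)) := by
    have ha' : IsUnit a⁻¹ := by
      obtain ⟨u, rfl⟩ := ha
      rw [ZMod.inv_coe_unit]
      exact u⁻¹.isUnit
    have h1 : ∑ χ : DirichletCharacter ℂ q, χ a⁻¹ * (if χ = 1 then (Real.log N : ℂ) else 0)
        = Real.log N := by
      simp only [mul_ite, mul_zero, sum_ite_eq', mem_univ, if_true]
      rw [MulChar.one_apply ha', one_mul]
    simp only [mul_sub, sum_sub_distrib, h1]
    push_cast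
    congr 1
    · simp only [vonMangoldt.residueClass_apply ha, mul_sum, sum_div]
      rw [sum_comm]
      refine sum_congr rfl fun χ _ => sum_congr rfl fun n _ => ?_
      ring
    · simp
  rw [← Real.norm_eq_abs, ← Complex.norm_real, hsum, norm_mul]
  refine mul_le_mul_of_nonneg_left (norm_sum_le_of_le _ fun χ _ => ?_) (norm_nonneg _)
  rw [norm_mul]
  exact (mul_le_of_le_one_left (norm_nonneg _) (χ.norm_le_one _)).trans (hC χ N hN)

/-- Passing from `Λ` to primes costs `O(1)`, since `∑ Λ(n)/n` over non-primes converges. -/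
theorem exists_abs_sum_prime_log_div_sub_log_le {a q : ℕ} (hq : 0 < q) (h : a.Coprime q) :
    ∃ C : ℝ, ∀ N : ℕ, 0 < N →
      |∑ n ∈ Ioc 0 N, (if n.Prime ∧ n % q = a % q then Real.log n / n else 0)
        - 1 / (q.totient : ℝ) * Real.log N| ≤ C := by
  have : NeZero q := ⟨hq.ne'⟩
  obtain ⟨C, hC⟩ := exists_abs_sum_residueClass_div_sub_log_le
    ((ZMod.isUnit_iff_coprime a q).2 h)
  set v : ℕ → ℝ := fun n => (if n.Prime then 0 else vonMangoldt.residueClass (a : ZMod q) n) / n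
    with hv
  have hsv : Summable v := vonMangoldt.summable_residueClass_non_primes_div _
  have hv0 (n : ℕ) : 0 ≤ v n := by
    simp only [hv]
    split_ifs
    · simp
    · exact div_nonneg (vonMangoldt.residueClass_nonneg _ _) (Nat.cast_nonneg _)
  have hpt (n : ℕ) : (if n.Prime ∧ n % q = a % q then Real.log n / n else 0)
      = vonMangoldt.residueClass (a : ZMod q) n / n - v n := by
    by_cases hp : n.Prime
    · by_cases hm : n % q = a % q
      · have hm' := (ZMod.natCast_eq_natCast_iff' n a q).2 hm
        simp [hp, hm, hm', hv, vonMangoldt.residueClass, vonMangoldt_apply_prime hp]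
      · have hm' := mt (ZMod.natCast_eq_natCast_iff' n a q).1 hm
        simp [hp, hm, hm', hv, vonMangoldt.residueClass]
    · simp [hp, hv]
  refine ⟨C + ∑' n, v n, fun N hN => ?_⟩
  simp only [hpt, sum_sub_distrib]
  have h1 := hC N hN
  have h2 := hsv.sum_le_tsum (Ioc 0 N) fun n _ => hv0 n
  have h3 : 0 ≤ ∑ n ∈ Ioc 0 N, v n := sum_nonneg fun n _ => hv0 n
  rw [abs_le] at h1 ⊢
  constructor <;> linarith

/-! ### Removing the logarithmic weight -/

/-- A discrete form of `∫ dt / (t log t) = log log t`, with error `O(1/log N)`. Each term is at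
most `1 / log n - 1 / log (n + 1)`, and these differences telescope. -/
theorem sum_Ico_abs_log_sub_le {N K : ℕ} (hN : 2 ≤ N) (hK : N ≤ K) :
    ∑ n ∈ Ico N K, |(Real.log (n + 1 : ℕ) - Real.log n) / Real.log (n + 1 : ℕ)
      - (Real.log (Real.log (n + 1 : ℕ)) - Real.log (Real.log n))| ≤ 1 / Real.log N := by
  have hstep (n : ℕ) (hn : n ∈ Ico N K) :
      |(Real.log (n + 1 : ℕ) - Real.log n) / Real.log (n + 1 : ℕ)
        - (Real.log (Real.log (n + 1 : ℕ)) - Real.log (Real.log n))|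
        ≤ -(1 / Real.log (n + 1 : ℕ)) - -(1 / Real.log n) := by
    have hn2 : (2 : ℝ) ≤ n := by exact_mod_cast hN.trans (mem_Ico.1 hn).1
    set u := Real.log (n + 1 : ℕ) with hu
    set v := Real.log n with hv
    have hv0 : 0 < v := Real.log_pos (by linarith)
    have huv : v ≤ u := Real.log_le_log (by linarith) (by push_cast; linarith)
    have hu0 : 0 < u := hv0.trans_le huv
    have huv1 : u - v ≤ 1 := by
      rw [hu, hv, ← Real.log_div (by positivity) (by positivity)]
      refine (Real.log_le_sub_one_of_pos (by positivity)).trans ?_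
      push_cast
      rw [sub_le_iff_le_add, div_le_iff₀ (by linarith)]
      linarith
    have hlog : Real.log u - Real.log v = Real.log (u / v) :=
      (Real.log_div hu0.ne' hv0.ne').symm
    have h1 := Real.log_le_sub_one_of_pos (div_pos hu0 hv0)
    have h2 := Real.one_sub_inv_le_log_of_pos (div_pos hu0 hv0)
    have h3 : 1 - (u / v)⁻¹ = (u - v) / u := by field_simp
    have h4 : u / v - 1 - (u - v) / u = (u - v) * (1 / v - 1 / u) := by field_simp
    have h5 : 0 ≤ 1 / v - 1 / u := sub_nonneg.2 (one_div_le_one_div_of_le hv0 huv)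
    have h6 : (u - v) * (1 / v - 1 / u) ≤ 1 / v - 1 / u := mul_le_of_le_one_left h5 huv1
    rw [hlog, abs_le]
    constructor <;> linarith
  refine (sum_le_sum hstep).trans ?_
  rw [sum_Ico_sub (fun n : ℕ => -(1 / Real.log n)) hK]
  have : 0 ≤ 1 / Real.log K := by positivity
  linarith

/-- The theorem for integer arguments `N ≥ 2`. -/
theorem exists_abs_sum_prime_inv_sub_le {a q : ℕ} (hq : 0 < q) (h : a.Coprime q) :
    ∃ B C : ℝ, 0 < C ∧ ∀ N : ℕ, 2 ≤ N →
      |∑ n ∈ range (N + 1), (if n.Prime ∧ n % q = a % q then (1 : ℝ) / n else 0)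
        - 1 / (q.totient : ℝ) * Real.log (Real.log N) - B| ≤ C / Real.log N := by
  obtain ⟨M, hM⟩ := exists_abs_sum_prime_log_div_sub_log_le hq h
  set c : ℝ := 1 / (q.totient : ℝ) with hc
  have hc0 : 0 < c := one_div_pos.2 (by exact_mod_cast Nat.totient_pos.2 hq)
  have hM0 : 0 ≤ M := (abs_nonneg _).trans (hM 1 one_pos)
  set w : ℕ → ℝ := fun n => if n.Prime ∧ n % q = a % q then Real.log n / n else 0 with hw
  set F : ℕ → ℝ := fun N =>
    ∑ n ∈ range (N + 1), (if n.Prime ∧ n % q = a % q then (1 : ℝ) / n else 0)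
    - c * Real.log (Real.log N) with hF
  -- The index is shifted by one, so that `e` starts at `n = 0`, where `Real.log 0 = 0`.
  set e : ℕ → ℝ := fun n => w (n + 1) - c * (Real.log (n + 1 : ℕ) - Real.log n) with he
  have hesum (N : ℕ) : ‖∑ n ∈ range N, e n‖ ≤ M := by
    rcases Nat.eq_zero_or_pos N with rfl | hN
    · simpa using hM0
    have h1 : ∑ n ∈ range N, e n = ∑ n ∈ Ioc 0 N, w n - c * Real.log N := by
      rw [sum_Ioc_eq_sum_range _ (by simp [hw]), sum_range_succ']
      simp only [he, sum_sub_distrib, ← mul_sum]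
      rw [← sum_sub_distrib, sum_range_sub (fun n : ℕ => Real.log n)]
      simp [hw]
    rw [h1]
    exact hM N hN
  have hdiff (N K : ℕ) (hN : 2 ≤ N) (hK : N ≤ K) : |F K - F N| ≤ (2 * M + c) / Real.log N := by
    have hlogN : 0 < Real.log N := Real.log_pos (by exact_mod_cast hN)
    have hA := norm_sum_Ico_smul_le e (fun n => 1 / Real.log (n + 1 : ℕ)) hesum (N := N) ?_ ?_ hK
    rotate_left
    · intro n hn
      refine one_div_le_one_div_of_le (Real.log_pos ?_) (Real.log_le_log (by positivity) ?_)
      · exact_mod_cast (by omega : 1 < n + 1)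
      · push_cast; linarith
    · intro n _
      positivity
    have hB := sum_Ico_abs_log_sub_le hN hK
    have hFd : F K - F N = ∑ n ∈ Ico N K, (1 / Real.log (n + 1 : ℕ)) • e n
        + c * ∑ n ∈ Ico N K, ((Real.log (n + 1 : ℕ) - Real.log n) / Real.log (n + 1 : ℕ)
          - (Real.log (Real.log (n + 1 : ℕ)) - Real.log (Real.log n))) := by
      rw [← sum_Ico_sub F hK, mul_sum, ← sum_add_distrib]
      refine sum_congr rfl fun n hn => ?_
      have hn1 : 0 < Real.log (n + 1 : ℕ) :=
        Real.log_pos (by have := (mem_Ico.1 hn).1; exact_mod_cast (by omega : 1 < n + 1))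
      have hw1 : (if (n + 1).Prime ∧ (n + 1) % q = a % q then (1 : ℝ) / (n + 1 : ℕ) else 0)
          = 1 / Real.log (n + 1 : ℕ) * w (n + 1) := by
        simp only [hw]
        split_ifs
        · field_simp
        · simp
      simp only [hF, he, smul_eq_mul]
      rw [sum_range_succ _ (n + 1), hw1]
      ring
    rw [hFd]
    have h1 : 1 / Real.log (N + 1 : ℕ) ≤ 1 / Real.log N :=
      one_div_le_one_div_of_le hlogN (Real.log_le_log (by positivity) (by push_cast; linarith))
    have h2 := (abs_sum_le_sum_abs _ _).trans hB
    calc _ ≤ 2 * M * (1 / Real.log (N + 1 : ℕ)) + c * (1 / Real.log N) := by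
          refine (abs_add_le _ _).trans (add_le_add hA ?_)
          rw [abs_mul, abs_of_pos hc0]
          exact mul_le_mul_of_nonneg_left h2 hc0.le
      _ ≤ 2 * M * (1 / Real.log N) + c * (1 / Real.log N) := by gcongr
      _ = _ := by ring
  -- The shift by two keeps the bounds clear of the junk values of `1 / log N` at `N = 0, 1`.
  have hlim : Tendsto (fun N : ℕ => (2 * M + c) / Real.log (N + 2 : ℕ)) atTop (𝓝 0) :=
    (Real.tendsto_log_atTop.comp (tendsto_natCast_atTop_atTop.comp
      (tendsto_add_atTop_nat 2))).const_div_atTop _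
  have hcau : CauchySeq fun N => F (N + 2) := by
    refine cauchySeq_of_le_tendsto_0 (fun N => 2 * ((2 * M + c) / Real.log (N + 2 : ℕ))) ?_
      (by simpa using hlim.const_mul 2)
    intro n m N hn hm
    have h1 := hdiff (N + 2) (n + 2) (by omega) (by omega)
    have h2 := hdiff (N + 2) (m + 2) (by omega) (by omega)
    rw [← Real.dist_eq] at h1 h2
    rw [dist_comm (F (m + 2))] at h2
    linarith [dist_triangle (F (n + 2)) (F (N + 2)) (F (m + 2))]
  obtain ⟨B, hB⟩ := cauchySeq_tendsto_of_complete hcau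
  rw [tendsto_add_atTop_iff_nat] at hB
  refine ⟨B, 2 * M + c, by positivity, fun N hN => ?_⟩
  change |F N - B| ≤ _
  rw [abs_sub_comm]
  refine le_of_tendsto (hB.sub_const _).abs ?_
  filter_upwards [eventually_ge_atTop N] with K hK
  exact hdiff N K hN hK

/-- **Theorem 7(ii) (Mertens in arithmetic progressions).** For coprime positive integers
`a` and `q` there are constants `B_{a,q}` and `C > 0` with
`|∑_{p ≤ x, p ≡ a (mod q)} 1/p − (1/φ(q)) log log x − B_{a,q}| ≤ C / log x` for all `x ≥ 3`. -/
theorem mertens_second_theorem_arith_progression :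
    ∀ a q : ℕ, 0 < a → 0 < q → Nat.Coprime a q →
      ∃ B : ℝ, ∃ C : ℝ, 0 < C ∧ ∀ x : ℝ, 3 ≤ x →
        |(∑ p ∈ ((Finset.range (⌊x⌋₊ + 1)).filter
              (fun p => Nat.Prime p ∧ p % q = a % q)), (1 : ℝ) / p) -
            (1 / (Nat.totient q : ℝ)) * Real.log (Real.log x) - B| ≤ C / Real.log x := by
  intro a q _ hq h
  obtain ⟨B, C, hC, hN⟩ := exists_abs_sum_prime_inv_sub_le hq h
  set c : ℝ := 1 / (q.totient : ℝ) with hc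
  have hc0 : 0 < c := one_div_pos.2 (by exact_mod_cast Nat.totient_pos.2 hq)
  refine ⟨B, 2 * (C + c), by positivity, fun x hx => ?_⟩
  set N := ⌊x⌋₊ with hNx
  have hN3 : 3 ≤ N := Nat.le_floor (by exact_mod_cast hx)
  have hN3' : (3 : ℝ) ≤ N := by exact_mod_cast hN3
  have hNle : (N : ℝ) ≤ x := Nat.floor_le (by linarith)
  have hxlt : x < N + 1 := Nat.lt_floor_add_one x
  have hv : 0 < Real.log N := Real.log_pos (by linarith)
  have hvu : Real.log N ≤ Real.log x := Real.log_le_log (by linarith) hNle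
  have hu : 0 < Real.log x := hv.trans_le hvu
  have hu2 : Real.log x ≤ 2 * Real.log N := by
    have h1 : Real.log x ≤ Real.log ((N : ℝ) ^ 2) :=
      Real.log_le_log (by linarith) (by nlinarith)
    simpa [Real.log_pow] using h1
  have huv1 : Real.log x - Real.log N ≤ 1 := by
    rw [← Real.log_div (by linarith) (by linarith)]
    refine (Real.log_le_sub_one_of_pos (div_pos (by linarith) (by linarith))).trans ?_
    rw [sub_le_iff_le_add, div_le_iff₀ (by linarith)]
    linarith
  have hll1 : Real.log (Real.log N) ≤ Real.log (Real.log x) := Real.log_le_log hv hvu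
  have hll2 : Real.log (Real.log x) - Real.log (Real.log N) ≤ 1 / Real.log N := by
    rw [← Real.log_div hu.ne' hv.ne']
    refine (Real.log_le_sub_one_of_pos (div_pos hu hv)).trans ?_
    rw [div_sub_one hv.ne']
    gcongr
  have hinv : 1 / Real.log N ≤ 2 / Real.log x := by
    rw [div_le_div_iff₀ hv hu]
    linarith
  have hmain := hN N (by omega)
  rw [← sum_filter] at hmain
  -- Replacing `log log x` by `log log N` costs at most `c / log N`.
  have hsplit (S : ℝ) : S - c * Real.log (Real.log x) - B = (S - c * Real.log (Real.log N) - B)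
      + -(c * (Real.log (Real.log x) - Real.log (Real.log N))) := by ring
  rw [hsplit]
  refine (abs_add_le _ _).trans ?_
  rw [abs_neg, abs_mul, abs_of_pos hc0, abs_of_nonneg (sub_nonneg.2 hll1)]
  calc _ ≤ C / Real.log N + c * (1 / Real.log N) := by gcongr
    _ = (C + c) * (1 / Real.log N) := by ring
    _ ≤ (C + c) * (2 / Real.log x) := by gcongr
    _ = _ := by ring
end
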